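/- Variance of debiased fast CUR decomposition (Theorem F.1, variance part): There exist absolute constants C₀ > 0 and C' > 0 such that the following holds. Let n ≥ 3 and p ≥ 3, let X, C, R be as in the CUR model with Cᵀ C and R Rᵀ invertible, suppose every nonzero row c_i of C satisfies ‖c_i‖²/‖C‖_F² ≥ n^{−α_c} and every nonzero row ρ_j of Rᵀ satisfies ‖ρ_j‖²/‖Rᵀ‖_F² ≥ p^{−α_r} for constants α_c, α_r > 0, let π_C i > 0 with ℓ_i(C) < m_c · π_C i for all i and π_R j > 0 with ℓ_j(Rᵀ) < m_r · π_R j for all j, let 0 < δ ≤ min{n^{−(3+α_c)}, p^{−(3+α_r)}}, and assume m_c ≥ C₀ · θ_max(C) · c · log(c/δ) and m_r ≥ C₀ · θ_max(Rᵀ) · r · log(r/δ). Then there exists an event ζ ⊆ Ω with P(ζ) ≥ 1 − δ such that all matrices inverted in Ǔ are invertible on ζ and Var_ζ(Ǔ) ≤ Δ_CUR + ε · L(U_CUR), where ε = C' · ((log n / log log n) · √(θ_max(C)³ c³/m_c³) + (log p / log log p) · √(θ_max(Rᵀ)³ r³/m_r³)), Δ_CUR = (Δ₁ + Δ₂)²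 + √(ε · L(U_CUR)) · (Δ₁ + Δ₂), Δ₁ = ‖diag(√(ℓ_i(C)/(m_c · π_C i)))_{1≤i≤n} · (I_n − C (Cᵀ C)⁻¹ Cᵀ) · X‖_F and Δ₂ = ‖diag(√(ℓ_j(Rᵀ)/(m_r · π_R j)))_{1≤j≤p} · (I_p − Rᵀ (R Rᵀ)⁻¹ R) · Xᵀ‖_F. -/

import Mathlib

/-!
In orthonormal coordinates `C = U B`, `Rᵀ = V B'` the reconstruction loss obeys Pythagoras
(`loss_orthonormal`): the excess loss of the sketched core is `‖M X Nᵀ - Uᵀ X V‖²`, where `M` and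
`N` are the debiased sketched least-squares operators, which satisfy `M U = 1` and `N V = 1`.  By
`core_split` the difference `M X Nᵀ - Uᵀ X V` is a left error `M (X - U Uᵀ X) V`, a right error of
the same kind, and a product of the two.  The event is a product `ζ₁ × ζ₂`, so the two sketches stay
independent after conditioning, and Minkowski's inequality (`variance_core`) reduces everything to
the one-sided estimate `one_sided`: with `t = θ_max c / m`, leverage-weighted residual norm `Δ` and
residual `Y`, the conditional mean of `‖M Y‖²` is at most `(Δ + 16 t ‖Y‖)²`.

For the one-sided estimate write `M Y = H̃⁻¹ G̃`, with `H̃` and `G̃` the debiased weighted sample sums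
of `u uᵀ` and `u yᵀ`, and compare with the sum `G` which has unbiased weights `1 / (m π)`:
`H̃⁻¹ G̃ = G + H̃⁻¹ (G̃ - H̃ G)`.

* The second moment of `G` is exactly `Δ²` (`expect_fsq_sgram`), because `Uᵀ Y = 0`.
* The debiasing weights are precisely those for which the diagonal terms of `H̃ G` combine with `G̃`
  into `G` itself (`debias_identity`).  What is left is a small multiple of `G` and a degenerate
  U-statistic, whose terms are uncorrelated unless they share the same pair of draws.  Its second
  moment is at most `8 t Δ²` (`expect_fsq_ustat`), and hence that of `G̃ - H̃ G` is `O(t Δ²)`, which is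
  `O(t² ‖Y‖²)`.
* On the event of `exists_event` the matrix `H̃` is at least `1 / 2`, so `H̃⁻¹` costs a factor `2`.
  This subspace embedding follows from Markov's inequality for a trace moment of order about
  `log (c / δ)`.  The moments of the centred sum `W` are bounded by exchangeable pairs
  (`expect_trace_pow_le`), and the recursion closes because the quadratic variation is dominated by
  `t (W + 2)` (`variance_proxy`).

The resulting bound `(Δ₁ + Δ₂ + 18 (t_C + t_R) √L)²` is stronger than the claimed one, since
`t² ≤ √(t³)` for `t ≤ 1` and `1 ≤ log n / log log n` for `n ≥ 3`.
-/

open Matrix Finset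

noncomputable section

/-- Probability of the i.i.d. sample `ω` of `m` draws from the sampling
distribution `π` (pmf of the product measure on `Ω = Fin m → Fin n`). -/
def samplingP {n : ℕ} (π : Fin n → ℝ) {m : ℕ} (ω : Fin m → Fin n) : ℝ :=
  ∏ s, π (ω s)

/-- The sampling matrix `S(ω) ∈ ℝ^{m×n}` with `S(ω)_{s,j} = 1/√(m π_{ω s})` if
`j = ω s` and `0` otherwise. -/
def samplingS {n : ℕ} (π : Fin n → ℝ) {m : ℕ} (ω : Fin m → Fin n) :
    Matrix (Fin m) (Fin n) ℝ :=
  Matrix.of fun s j => if j = ω s then 1 / Real.sqrt (m * π (ω s)) else 0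

/-- The `i`-th leverage score `ℓ_i(X) = x_iᵀ (Xᵀ X)⁻¹ x_i`. -/
def lev {n p : ℕ} (X : Matrix (Fin n) (Fin p) ℝ) (i : Fin n) : ℝ :=
  X i ⬝ᵥ ((Xᵀ * X)⁻¹ *ᵥ X i)

/-- Maximum importance sampling approximation factor
`θ_max(X) = max_i ℓ_i(X)/(p π_i)`. -/
def thetaMax {n p : ℕ} (X : Matrix (Fin n) (Fin p) ℝ) (π : Fin n → ℝ) : ℝ :=
  ⨆ i, lev X i / (p * π i)

/-- Probability of an event `ζ` relative to the pmf `P`. -/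
def eventProb {Ω : Type*} (P : Ω → ℝ) (ζ : Finset Ω) : ℝ :=
  ∑ ω ∈ ζ, P ω

/-- Conditional expectation `E_ζ[f] = P(ζ)⁻¹ ∑_{ω ∈ ζ} P(ω) f(ω)`. -/
def condExp {Ω V : Type*} [AddCommMonoid V] [Module ℝ V]
    (P : Ω → ℝ) (ζ : Finset Ω) (f : Ω → V) : V :=
  (eventProb P ζ)⁻¹ • ∑ ω ∈ ζ, P ω • f ω

/-- Frobenius norm `‖A‖_F = √(trace (Aᵀ A))`. -/
def frobNorm {k l : ℕ} (A : Matrix (Fin k) (Fin l) ℝ) : ℝ :=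
  Real.sqrt ((Aᵀ * A).trace)

/-- Loewner order: `A ⪯ B` iff `B − A` is positive semidefinite. -/
def loewnerLE {k : ℕ} (A B : Matrix (Fin k) (Fin k) ℝ) : Prop :=
  (B - A).PosSemidef

/-- Debiased sampling matrix
`Š(ω) = diag(1/√(1 − ℓ_{ω s}(X)/(m π_{ω s})))_{s} · S(ω)`. -/
def samplingSdeb {n p : ℕ} (X : Matrix (Fin n) (Fin p) ℝ) (π : Fin n → ℝ) {m : ℕ}
    (ω : Fin m → Fin n) : Matrix (Fin m) (Fin n) ℝ :=
  Matrix.diagonal (fun s => 1 / Real.sqrt (1 - lev X (ω s) / (m * π (ω s)))) *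
    samplingS π ω

/-- CUR reconstruction loss `L(U) = ‖C U R − X‖_F²`. -/
def lossCUR {n p c r : ℕ} (X : Matrix (Fin n) (Fin p) ℝ)
    (Cm : Matrix (Fin n) (Fin c) ℝ) (Rm : Matrix (Fin r) (Fin p) ℝ)
    (U : Matrix (Fin c) (Fin r) ℝ) : ℝ :=
  frobNorm (Cm * U * Rm - X) ^ 2

/-- The optimal core matrix `U_CUR = (Cᵀ C)⁻¹ Cᵀ X Rᵀ (R Rᵀ)⁻¹`. -/
def optCUR {n p c r : ℕ} (X : Matrix (Fin n) (Fin p) ℝ)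
    (Cm : Matrix (Fin n) (Fin c) ℝ) (Rm : Matrix (Fin r) (Fin p) ℝ) :
    Matrix (Fin c) (Fin r) ℝ :=
  (Cmᵀ * Cm)⁻¹ * Cmᵀ * X * Rmᵀ * (Rm * Rmᵀ)⁻¹

/-- Joint pmf on the CUR sample space
`Ω = (Fin m_c → Fin n) × (Fin m_r → Fin p)`. -/
def curP {n p mc mr : ℕ} (πC : Fin n → ℝ) (πR : Fin p → ℝ)
    (ω : (Fin mc → Fin n) × (Fin mr → Fin p)) : ℝ :=
  samplingP πC ω.1 * samplingP πR ω.2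

/-- The debiased fast CUR estimator
`Ǔ(ω) = ((Š_C C)ᵀ Š_C C)⁻¹ (Š_C C)ᵀ (Š_C X Š_Rᵀ) Š_R Rᵀ (R Š_Rᵀ Š_R Rᵀ)⁻¹`. -/
def curUcheck {n p c r mc mr : ℕ} (X : Matrix (Fin n) (Fin p) ℝ)
    (Cm : Matrix (Fin n) (Fin c) ℝ) (Rm : Matrix (Fin r) (Fin p) ℝ)
    (πC : Fin n → ℝ) (πR : Fin p → ℝ)
    (ω : (Fin mc → Fin n) × (Fin mr → Fin p)) : Matrix (Fin c) (Fin r) ℝ :=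
  ((samplingSdeb Cm πC ω.1 * Cm)ᵀ * (samplingSdeb Cm πC ω.1 * Cm))⁻¹ *
    (samplingSdeb Cm πC ω.1 * Cm)ᵀ *
    (samplingSdeb Cm πC ω.1 * X * (samplingSdeb Rmᵀ πR ω.2)ᵀ) *
    (samplingSdeb Rmᵀ πR ω.2 * Rmᵀ) *
    (Rm * (samplingSdeb Rmᵀ πR ω.2)ᵀ * samplingSdeb Rmᵀ πR ω.2 * Rmᵀ)⁻¹

/-- `Δ₁ = ‖diag(√(ℓ_i(C)/(m_c π_{C,i}))) (I_n − C (Cᵀ C)⁻¹ Cᵀ) X‖_F`. -/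
def curDelta1 {n p c : ℕ} (X : Matrix (Fin n) (Fin p) ℝ)
    (Cm : Matrix (Fin n) (Fin c) ℝ) (πC : Fin n → ℝ) (mc : ℕ) : ℝ :=
  frobNorm (Matrix.diagonal (fun i => Real.sqrt (lev Cm i / (mc * πC i))) *
    ((1 : Matrix (Fin n) (Fin n) ℝ) - Cm * (Cmᵀ * Cm)⁻¹ * Cmᵀ) * X)

/-- `Δ₂ = ‖diag(√(ℓ_j(Rᵀ)/(m_r π_{R,j}))) (I_p − Rᵀ (R Rᵀ)⁻¹ R) Xᵀ‖_F`. -/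
def curDelta2 {n p r : ℕ} (X : Matrix (Fin n) (Fin p) ℝ)
    (Rm : Matrix (Fin r) (Fin p) ℝ) (πR : Fin p → ℝ) (mr : ℕ) : ℝ :=
  frobNorm (Matrix.diagonal (fun j => Real.sqrt (lev Rmᵀ j / (mr * πR j))) *
    ((1 : Matrix (Fin p) (Fin p) ℝ) - Rmᵀ * (Rm * Rmᵀ)⁻¹ * Rm) * Xᵀ)

/-! ### Independent sampling on a finite product space -/

lemma samplingP_nonneg {n m : ℕ} {π : Fin n → ℝ} (h0 : ∀ i, 0 < π i) (ω : Fin m → Fin n) :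
    0 ≤ samplingP π ω := Finset.prod_nonneg fun s _ => (h0 _).le

lemma sum_samplingP {n m : ℕ} {π : Fin n → ℝ} (h1 : ∑ i, π i = 1) :
    ∑ ω : Fin m → Fin n, samplingP π ω = 1 := by
  unfold samplingP
  rw [← Fintype.prod_sum (fun (_ : Fin m) (i : Fin n) => π i)]
  simp [h1]

lemma samplingP_update {n m : ℕ} (π : Fin n → ℝ) (ω : Fin m → Fin n) (s : Fin m) (i : Fin n) :
    samplingP π (Function.update ω s i) * π (ω s) = samplingP π ω * π i := by
  unfold samplingP
  rw [← Finset.mul_prod_erase univ _ (Finset.mem_univ s),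
    ← Finset.mul_prod_erase univ (fun s => π (ω s)) (Finset.mem_univ s)]
  have : ∏ x ∈ univ.erase s, π (Function.update ω s i x) = ∏ x ∈ univ.erase s, π (ω x) := by
    refine Finset.prod_congr rfl fun x hx => ?_
    rw [Function.update_of_ne (Finset.ne_of_mem_erase hx)]
  rw [this, Function.update_self]
  ring

/-- Exchangeability: a sample and the sample with one draw replaced by an independent fresh draw
form an exchangeable pair. -/
lemma resample_swap {n m : ℕ} (π : Fin n → ℝ) (s : Fin m)
    (Φ : (Fin m → Fin n) → (Fin m → Fin n) → ℝ) :
    ∑ ω, samplingP π ω * ∑ i, π i * Φ ω (Function.update ω s i) =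
      ∑ ω, samplingP π ω * ∑ i, π i * Φ (Function.update ω s i) ω := by
  simp_rw [Finset.mul_sum]
  rw [← Fintype.sum_prod_type', ← Fintype.sum_prod_type']
  let e : ((Fin m → Fin n) × Fin n) → ((Fin m → Fin n) × Fin n) :=
    fun x => (Function.update x.1 s x.2, x.1 s)
  have he : Function.Involutive e := by
    rintro ⟨ω, i⟩
    simp [e]
  refine Fintype.sum_equiv he.toPerm _ _ ?_
  rintro ⟨ω, i⟩
  simp only [Function.Involutive.coe_toPerm, e, Function.update_idem, Function.update_eq_self]
  rw [← mul_assoc, ← mul_assoc, samplingP_update]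

lemma resample {n m : ℕ} {π : Fin n → ℝ} (h1 : ∑ i, π i = 1) (s : Fin m)
    (F : (Fin m → Fin n) → ℝ) :
    ∑ ω, samplingP π ω * F ω =
      ∑ ω, samplingP π ω * ∑ i, π i * F (Function.update ω s i) := by
  rw [← resample_swap π s (fun ω _ => F ω)]
  simp [← Finset.sum_mul, h1]

lemma expect_one {n m : ℕ} {π : Fin n → ℝ} (h1 : ∑ i, π i = 1) (s : Fin m) (f : Fin n → ℝ) :
    ∑ ω, samplingP π ω * f (ω s) = ∑ i, π i * f i := by
  rw [resample h1 s]
  simp [← Finset.sum_mul, sum_samplingP h1]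

lemma expect_two {n m : ℕ} {π : Fin n → ℝ} (h1 : ∑ i, π i = 1) {r s : Fin m} (hrs : r ≠ s)
    (f : Fin n → Fin n → ℝ) :
    ∑ ω, samplingP π ω * f (ω r) (ω s) = ∑ i, π i * ∑ j, π j * f i j := by
  rw [resample h1 s]
  simp only [Function.update_self, Function.update_of_ne hrs]
  exact expect_one h1 r (fun i => ∑ j, π j * f i j)

/-- If `F` has mean zero in the draw `s`, whatever the other draws are, then `F` has mean zero. -/
lemma expect_zero {n m : ℕ} {π : Fin n → ℝ} (h1 : ∑ i, π i = 1) (s : Fin m)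
    (F : (Fin m → Fin n) → ℝ) (hF : ∀ ω, ∑ i, π i * F (Function.update ω s i) = 0) :
    ∑ ω, samplingP π ω * F ω = 0 := by
  rw [resample h1 s]; simp [hF]

/-- Variance of a sum of i.i.d. centred variables. -/
lemma expect_sum_sq {n m : ℕ} {π : Fin n → ℝ} (h1 : ∑ i, π i = 1) (φ : Fin n → ℝ)
    (hφ : ∑ i, π i * φ i = 0) :
    ∑ ω : Fin m → Fin n, samplingP π ω * (∑ s, φ (ω s)) ^ 2 = m * ∑ i, π i * φ i ^ 2 := by
  have key : ∀ r s : Fin m, ∑ ω : Fin m → Fin n, samplingP π ω * (φ (ω r) * φ (ω s)) =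
      if r = s then ∑ i, π i * φ i ^ 2 else 0 := by
    intro r s
    split_ifs with h
    · subst h
      rw [← expect_one h1 r]
      simp [sq]
    · rw [expect_two h1 h (fun i j => φ i * φ j)]
      refine Finset.sum_eq_zero fun i _ => ?_
      have : ∑ j, π j * (φ i * φ j) = φ i * ∑ j, π j * φ j := by
        rw [Finset.mul_sum]; exact Finset.sum_congr rfl fun j _ => by ring
      rw [this, hφ]; simp
  calc _ = ∑ ω : Fin m → Fin n, ∑ r, ∑ s, samplingP π ω * (φ (ω r) * φ (ω s)) := by
        refine Finset.sum_congr rfl fun ω _ => ?_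
        rw [sq, Finset.sum_mul_sum, Finset.mul_sum]
        simp_rw [Finset.mul_sum]
    _ = ∑ r : Fin m, ∑ s : Fin m, ∑ ω : Fin m → Fin n, samplingP π ω * (φ (ω r) * φ (ω s)) := by
        rw [Finset.sum_comm]
        refine Finset.sum_congr rfl fun r _ => Finset.sum_comm
    _ = _ := by
        simp_rw [key]
        simp

/-- Second moment of a completely degenerate `U`-statistic of order two: two of its terms are
uncorrelated unless they involve the same pair of draws. -/
lemma expect_ustat_sq {n m : ℕ} {π : Fin n → ℝ} (h0 : ∀ i, 0 < π i) (h1 : ∑ i, π i = 1)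
    (h : Fin n → Fin n → ℝ)
    (hl : ∀ j, ∑ i, π i * h i j = 0) (hr : ∀ i, ∑ j, π j * h i j = 0) :
    ∑ ω : Fin m → Fin n, samplingP π ω *
        (∑ r, ∑ s, if r = s then 0 else h (ω r) (ω s)) ^ 2 ≤
      2 * (m : ℝ) ^ 2 * ∑ i, π i * ∑ j, π j * h i j ^ 2 := by
  set σ := ∑ i, π i * ∑ j, π j * h i j ^ 2 with hσ
  have hσ0 : 0 ≤ σ := Finset.sum_nonneg fun i _ => mul_nonneg (h0 i).le
    (Finset.sum_nonneg fun j _ => mul_nonneg (h0 j).le (sq_nonneg _))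
  let H : (Fin m × Fin m) → (Fin m → Fin n) → ℝ :=
    fun x ω => if x.1 = x.2 then 0 else h (ω x.1) (ω x.2)
  have hz : ∀ x y : Fin m × Fin m, ∀ s, (s = x.1 ∨ s = x.2) → s ≠ y.1 → s ≠ y.2 →
      ∑ ω : Fin m → Fin n, samplingP π ω * (H x ω * H y ω) = 0 := by
    rintro ⟨a, b⟩ ⟨a', b'⟩ s hs h1' h2'
    simp only at hs h1' h2'
    refine expect_zero h1 s _ fun ω => ?_
    by_cases hab : a = b
    · simp [H, hab]
    by_cases hab' : a' = b'
    · simp [H, hab']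
    simp only [H, hab, hab', if_false, Function.update_of_ne h1'.symm,
      Function.update_of_ne h2'.symm]
    simp_rw [← mul_assoc]
    rw [← Finset.sum_mul]
    rcases hs with rfl | rfl
    · simp only [Function.update_self, Function.update_of_ne (Ne.symm hab), hl, zero_mul]
    · simp only [Function.update_self, Function.update_of_ne hab, hr, zero_mul]
  have hsq : ∀ x : Fin m × Fin m, ∑ ω : Fin m → Fin n, samplingP π ω * (H x ω) ^ 2 ≤ σ := by
    rintro ⟨a, b⟩
    by_cases hab : a = b
    · simpa [H, hab] using hσ0
    · simp only [H, hab, if_false]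
      rw [expect_two h1 hab (fun i j => h i j ^ 2)]
  have hxy : ∀ x y : Fin m × Fin m, ∑ ω : Fin m → Fin n, samplingP π ω * (H x ω * H y ω) ≤
      σ * ((if y = x then 1 else 0) + (if y = x.swap then 1 else 0)) := by
    intro x y
    have hle : ∑ ω : Fin m → Fin n, samplingP π ω * (H x ω * H y ω) ≤ σ := by
      have : ∑ ω : Fin m → Fin n, samplingP π ω * (H x ω * H y ω) ≤
          ∑ ω : Fin m → Fin n, (samplingP π ω * (H x ω) ^ 2 + samplingP π ω * (H y ω) ^ 2) / 2 := by
        refine Finset.sum_le_sum fun ω _ => ?_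
        nlinarith [mul_nonneg (samplingP_nonneg h0 ω) (sq_nonneg (H x ω - H y ω))]
      rw [← Finset.sum_div, Finset.sum_add_distrib] at this
      linarith [hsq x, hsq y]
    by_cases e1 : y = x
    · rw [if_pos e1]; split_ifs <;> nlinarith
    by_cases e2 : y = x.swap
    · rw [if_pos e2, if_neg e1]; linarith
    rw [if_neg e1, if_neg e2]
    refine le_of_eq ?_
    rw [add_zero, mul_zero]
    obtain ⟨a, b⟩ := x
    obtain ⟨a', b'⟩ := y
    simp only [Prod.swap_prod_mk, Prod.mk.injEq, not_and] at e1 e2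
    by_cases hab : a = b
    · simp [H, hab]
    by_cases g1 : a ≠ a' ∧ a ≠ b'
    · exact hz (a, b) (a', b') a (Or.inl rfl) g1.1 g1.2
    refine hz (a, b) (a', b') b (Or.inr rfl) ?_ ?_ <;> simp only
    all_goals grind
  calc _ = ∑ ω : Fin m → Fin n, ∑ x, ∑ y, samplingP π ω * (H x ω * H y ω) := by
        refine Finset.sum_congr rfl fun ω _ => ?_
        have : (∑ r, ∑ s, if r = s then 0 else h (ω r) (ω s)) = ∑ x, H x ω := by
          rw [Fintype.sum_prod_type]
        rw [this, sq, Finset.sum_mul_sum, Finset.mul_sum]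
        simp_rw [Finset.mul_sum]
    _ = ∑ x, ∑ y, ∑ ω : Fin m → Fin n, samplingP π ω * (H x ω * H y ω) := by
        rw [Finset.sum_comm]
        refine Finset.sum_congr rfl fun r _ => Finset.sum_comm
    _ ≤ ∑ x : Fin m × Fin m, ∑ y : Fin m × Fin m,
        σ * ((if y = x then 1 else 0) + (if y = x.swap then 1 else 0)) :=
        Finset.sum_le_sum fun x _ => Finset.sum_le_sum fun y _ => hxy x y
    _ = _ := by
        simp_rw [← Finset.mul_sum, Finset.sum_add_distrib]
        simp
        ring

/-! ### Moments of sums of independent random symmetric matrices -/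

lemma exists_diag {c : ℕ} {A : Matrix (Fin c) (Fin c) ℝ} (hA : Aᵀ = A) :
    ∃ (O : Matrix (Fin c) (Fin c) ℝ) (l : Fin c → ℝ), Oᵀ * O = 1 ∧ O * Oᵀ = 1 ∧
      ∀ q : ℕ, A ^ q = O * diagonal (fun a => l a ^ q) * Oᵀ := by
  have hH : A.IsHermitian := by rw [IsHermitian, conjTranspose_eq_transpose_of_trivial, hA]
  have hs := hH.spectral_theorem
  have h1 := Unitary.coe_star_mul_self hH.eigenvectorUnitary
  have h2 := Unitary.coe_mul_star_self hH.eigenvectorUnitary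
  rw [Unitary.conjStarAlgAut_apply] at hs
  simp only [star_eq_conjTranspose, conjTranspose_eq_transpose_of_trivial] at hs h1 h2
  have h2' : (hH.eigenvectorUnitary : Matrix (Fin c) (Fin c) ℝ) *
      (hH.eigenvectorUnitary : Matrix (Fin c) (Fin c) ℝ)ᵀ = 1 := h2
  generalize (hH.eigenvectorUnitary : Matrix (Fin c) (Fin c) ℝ) = O at hs h1 h2'
  have hs' : A = O * diagonal hH.eigenvalues * Oᵀ := hs
  generalize hH.eigenvalues = l at hs'
  refine ⟨O, l, h1, h2', fun q => ?_⟩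
  induction q with
  | zero => simp [h2']
  | succ q ih =>
    rw [pow_succ, ih]
    conv_lhs => rw [hs']
    have e : (diagonal fun a => l a ^ (q + 1)) = (diagonal fun a => l a ^ q) * diagonal l := by
      rw [diagonal_mul_diagonal]; congr 1
    rw [e]
    simp only [Matrix.mul_assoc]
    rw [← Matrix.mul_assoc Oᵀ O, h1, Matrix.one_mul]

/-- In eigenbases of two symmetric matrices `X` and `Y`, the traces `tr (X^q Y^r)` are all integrals
of `λ^q μ^r` against one and the same nonnegative weight on pairs of eigenvalues. -/
lemma exists_joint_weight {c : ℕ} {X Y : Matrix (Fin c) (Fin c) ℝ} (hX : Xᵀ = X) (hY : Yᵀ = Y) :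
    ∃ (l μ : Fin c → ℝ) (w : Fin c → Fin c → ℝ), (∀ a b, 0 ≤ w a b) ∧
      ∀ q r : ℕ, (X ^ q * Y ^ r).trace = ∑ a, ∑ b, w a b * (l a ^ q * μ b ^ r) := by
  obtain ⟨O, l, -, -, hO⟩ := exists_diag hX
  obtain ⟨V, μ, -, -, hV⟩ := exists_diag hY
  refine ⟨l, μ, fun a b => (Oᵀ * V) a b ^ 2, fun a b => sq_nonneg _, fun q r => ?_⟩
  rw [hO, hV]
  have : (O * diagonal (fun a => l a ^ q) * Oᵀ * (V * diagonal (fun a => μ a ^ r) * Vᵀ)).trace =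
      (diagonal (fun a => l a ^ q) * (Oᵀ * V) * diagonal (fun a => μ a ^ r) * (Oᵀ * V)ᵀ).trace := by
    rw [transpose_mul, transpose_transpose, Matrix.mul_assoc O, Matrix.mul_assoc O,
      trace_mul_comm]
    simp only [Matrix.mul_assoc]
  rw [this, trace]
  refine Finset.sum_congr rfl fun a _ => ?_
  rw [diag_apply, Matrix.mul_apply]
  refine Finset.sum_congr rfl fun b _ => ?_
  rw [mul_diagonal, diagonal_mul, transpose_apply]
  ring

lemma pow_mul_pow_add_le {q r : ℕ} (h : Even (q + r)) (x y : ℝ) :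
    x ^ q * y ^ r + x ^ r * y ^ q ≤ x ^ (q + r) + y ^ (q + r) := by
  have e1 : x ^ (q + r) = |x| ^ q * |x| ^ r := by rw [← pow_add, h.pow_abs]
  have e2 : y ^ (q + r) = |y| ^ q * |y| ^ r := by rw [← pow_add, h.pow_abs]
  have e3 : x ^ q * y ^ r ≤ |x| ^ q * |y| ^ r := by
    rw [← abs_pow, ← abs_pow, ← abs_mul]; exact le_abs_self _
  have e4 : x ^ r * y ^ q ≤ |x| ^ r * |y| ^ q := by
    rw [← abs_pow, ← abs_pow, ← abs_mul]; exact le_abs_self _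
  have : 0 ≤ (|x| ^ q - |y| ^ q) * (|x| ^ r - |y| ^ r) := by
    rcases le_total |x| |y| with h | h
    · exact mul_nonneg_of_nonpos_of_nonpos
        (sub_nonpos.2 (pow_le_pow_left₀ (abs_nonneg _) h _))
        (sub_nonpos.2 (pow_le_pow_left₀ (abs_nonneg _) h _))
    · exact mul_nonneg (sub_nonneg.2 (pow_le_pow_left₀ (abs_nonneg _) h _))
        (sub_nonneg.2 (pow_le_pow_left₀ (abs_nonneg _) h _))
  rw [e1, e2]
  nlinarith

lemma sub_mul_pow_sub_pow_le (k : ℕ) (x y : ℝ) :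
    (x - y) * (x ^ (2 * k + 1) - y ^ (2 * k + 1)) ≤
      (2 * k + 1) / 2 * ((x - y) ^ 2 * (x ^ (2 * k) + y ^ (2 * k))) := by
  have hg : (∑ i ∈ range (2 * k + 1), x ^ i * y ^ (2 * k - i)) * (x - y) =
      x ^ (2 * k + 1) - y ^ (2 * k + 1) := by
    rw [← (Commute.all x y).geom_sum₂_mul]; rfl
  have hs : 2 * (∑ i ∈ range (2 * k + 1), x ^ i * y ^ (2 * k - i)) ≤
      (2 * k + 1) * (x ^ (2 * k) + y ^ (2 * k)) := by
    have hfl : (∑ i ∈ range (2 * k + 1), x ^ i * y ^ (2 * k - i)) =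
        ∑ i ∈ range (2 * k + 1), x ^ (2 * k - i) * y ^ i := by
      rw [← Finset.sum_range_reflect]
      refine Finset.sum_congr rfl fun i hi => ?_
      have : i < 2 * k + 1 := Finset.mem_range.1 hi
      congr 2 <;> omega
    rw [two_mul]
    nth_rewrite 2 [hfl]
    rw [← Finset.sum_add_distrib]
    calc _ ≤ ∑ i ∈ range (2 * k + 1), (x ^ (2 * k) + y ^ (2 * k)) := by
          refine Finset.sum_le_sum fun i hi => ?_
          have hi' : i < 2 * k + 1 := Finset.mem_range.1 hi
          have e : i + (2 * k - i) = 2 * k := by omega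
          have := pow_mul_pow_add_le (q := i) (r := 2 * k - i) (by rw [e]; exact even_two_mul k) x y
          rwa [e] at this
      _ = _ := by simp; ring
  rw [← hg]
  nlinarith [mul_le_mul_of_nonneg_left hs (sq_nonneg (x - y))]

/-- Mean value inequality for the trace of an odd power. -/
lemma trace_sub_mul_pow_le {c : ℕ} {X Y : Matrix (Fin c) (Fin c) ℝ} (hX : Xᵀ = X) (hY : Yᵀ = Y)
    (k : ℕ) :
    ((X - Y) * (X ^ (2 * k + 1) - Y ^ (2 * k + 1))).trace ≤
      (2 * k + 1) / 2 * (((X - Y) * (X - Y) * X ^ (2 * k)).trace +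
        ((Y - X) * (Y - X) * Y ^ (2 * k)).trace) := by
  obtain ⟨l, μ, w, hw, h⟩ := exists_joint_weight hX hY
  have cX : ∀ q, (X ^ q).trace = ∑ a, ∑ b, w a b * l a ^ q := fun q => by
    have := h q 0; simpa using this
  have cY : ∀ q, (Y ^ q).trace = ∑ a, ∑ b, w a b * μ b ^ q := fun q => by
    have := h 0 q; simpa using this
  have e1 : ((X - Y) * (X ^ (2 * k + 1) - Y ^ (2 * k + 1))).trace =
      ∑ a, ∑ b, w a b * ((l a - μ b) * (l a ^ (2 * k + 1) - μ b ^ (2 * k + 1))) := by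
    have : ((X - Y) * (X ^ (2 * k + 1) - Y ^ (2 * k + 1))).trace =
        (X ^ (2 * k + 2)).trace - (X ^ 1 * Y ^ (2 * k + 1)).trace
          - (X ^ (2 * k + 1) * Y ^ 1).trace + (Y ^ (2 * k + 2)).trace := by
      rw [Matrix.sub_mul, Matrix.mul_sub, Matrix.mul_sub, trace_sub, trace_sub, trace_sub,
        pow_one, pow_one, trace_mul_comm Y, ← pow_succ', ← pow_succ']
      ring
    rw [this, h, h, cX, cY]
    simp only [← Finset.sum_sub_distrib, ← Finset.sum_add_distrib]
    refine Finset.sum_congr rfl fun a _ => Finset.sum_congr rfl fun b _ => ?_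
    ring
  have e2 : ((X - Y) * (X - Y) * X ^ (2 * k)).trace =
      ∑ a, ∑ b, w a b * ((l a - μ b) ^ 2 * l a ^ (2 * k)) := by
    have : ((X - Y) * (X - Y) * X ^ (2 * k)).trace =
        (X ^ (2 * k + 2)).trace - 2 * (X ^ (2 * k + 1) * Y ^ 1).trace
          + (X ^ (2 * k) * Y ^ 2).trace := by
      have a1 : ((X - Y) * (X - Y) * X ^ (2 * k)) =
          X * X * X ^ (2 * k) - X * Y * X ^ (2 * k) - Y * X * X ^ (2 * k)
            + Y * Y * X ^ (2 * k) := by noncomm_ring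
      have a2 : X * X * X ^ (2 * k) = X ^ (2 * k + 2) := by
        rw [← pow_two, ← pow_add, add_comm]
      have a3 : (X * Y * X ^ (2 * k)).trace = (X ^ (2 * k + 1) * Y ^ 1).trace := by
        rw [trace_mul_comm, ← Matrix.mul_assoc, ← pow_succ, pow_one]
      have a4 : (Y * X * X ^ (2 * k)).trace = (X ^ (2 * k + 1) * Y ^ 1).trace := by
        rw [Matrix.mul_assoc, ← pow_succ', trace_mul_comm, pow_one]
      have a5 : (Y * Y * X ^ (2 * k)).trace = (X ^ (2 * k) * Y ^ 2).trace := by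
        rw [trace_mul_comm, pow_two]
      rw [a1, trace_add, trace_sub, trace_sub, a2, a3, a4, a5]
      ring
    rw [this, h, h, cX, Finset.mul_sum]
    simp only [Finset.mul_sum, ← Finset.sum_sub_distrib, ← Finset.sum_add_distrib]
    refine Finset.sum_congr rfl fun a _ => Finset.sum_congr rfl fun b _ => ?_
    ring
  have e3 : ((Y - X) * (Y - X) * Y ^ (2 * k)).trace =
      ∑ a, ∑ b, w a b * ((l a - μ b) ^ 2 * μ b ^ (2 * k)) := by
    have : ((Y - X) * (Y - X) * Y ^ (2 * k)).trace =
        (Y ^ (2 * k + 2)).trace - 2 * (X ^ 1 * Y ^ (2 * k + 1)).trace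
          + (X ^ 2 * Y ^ (2 * k)).trace := by
      have a1 : ((Y - X) * (Y - X) * Y ^ (2 * k)) =
          Y * Y * Y ^ (2 * k) - Y * X * Y ^ (2 * k) - X * Y * Y ^ (2 * k)
            + X * X * Y ^ (2 * k) := by noncomm_ring
      have a2 : Y * Y * Y ^ (2 * k) = Y ^ (2 * k + 2) := by
        rw [← pow_two, ← pow_add, add_comm]
      have a3 : (Y * X * Y ^ (2 * k)).trace = (X ^ 1 * Y ^ (2 * k + 1)).trace := by
        rw [trace_mul_comm, ← Matrix.mul_assoc, ← pow_succ, pow_one, trace_mul_comm]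
      have a4 : (X * Y * Y ^ (2 * k)).trace = (X ^ 1 * Y ^ (2 * k + 1)).trace := by
        rw [Matrix.mul_assoc, ← pow_succ', pow_one]
      rw [a1, trace_add, trace_sub, trace_sub, a2, a3, a4, pow_two X]
      ring
    rw [this, h, h, cY, Finset.mul_sum]
    simp only [Finset.mul_sum, ← Finset.sum_sub_distrib, ← Finset.sum_add_distrib]
    refine Finset.sum_congr rfl fun a _ => Finset.sum_congr rfl fun b _ => ?_
    ring
  rw [e1, e2, e3, ← Finset.sum_add_distrib, Finset.mul_sum]
  refine Finset.sum_le_sum fun a _ => ?_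
  rw [← Finset.sum_add_distrib, Finset.mul_sum]
  refine Finset.sum_le_sum fun b _ => ?_
  have := mul_le_mul_of_nonneg_left (sub_mul_pow_sub_pow_le k (l a) (μ b)) (hw a b)
  calc _ ≤ _ := this
    _ = _ := by ring

/-- The trace pairing of an even power with a positive semidefinite matrix is nonnegative. -/
lemma trace_mul_even_pow_nonneg {c : ℕ} {A W : Matrix (Fin c) (Fin c) ℝ} (hA : A.PosSemidef)
    (hW : Wᵀ = W) (k : ℕ) : 0 ≤ (A * W ^ (2 * k)).trace := by
  have h := (hA.mul_mul_conjTranspose_same (W ^ k)).trace_nonneg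
  rw [conjTranspose_eq_transpose_of_trivial, transpose_pow, hW, trace_mul_comm,
    ← Matrix.mul_assoc, ← pow_add, ← two_mul, trace_mul_comm] at h
  exact h

lemma trace_odd_pow_le {c : ℕ} {W : Matrix (Fin c) (Fin c) ℝ} (hW : Wᵀ = W) (k : ℕ) :
    2 * (W ^ (2 * k + 1)).trace ≤ (W ^ (2 * k + 2)).trace + (W ^ (2 * k)).trace := by
  have hp : ((W - 1) * (W - 1)).PosSemidef := by
    have := posSemidef_self_mul_conjTranspose (W - 1)
    rwa [conjTranspose_eq_transpose_of_trivial, transpose_sub, hW, transpose_one] at this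
  have h := trace_mul_even_pow_nonneg hp hW k
  have e : (W - 1) * (W - 1) * W ^ (2 * k) =
      W ^ (2 * k + 2) - (2 : ℝ) • W ^ (2 * k + 1) + W ^ (2 * k) := by
    have a : (W - 1) * (W - 1) * W ^ (2 * k) =
      W * (W * W ^ (2 * k)) - (2 : ℝ) • (W * W ^ (2 * k)) + W ^ (2 * k) := by
      rw [two_smul]; noncomm_ring
    rw [a, ← pow_succ', ← pow_succ']
  rw [e, trace_add, trace_sub, trace_smul, smul_eq_mul] at h
  linarith

/-- One step of the moment recursion, by the method of exchangeable pairs: replacing the draw `s` by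
a fresh one turns `tr (B_s W^{2k+1})` into a divided difference of the odd power. -/
lemma expect_trace_step {n m c : ℕ} {π : Fin n → ℝ} (h0 : ∀ i, 0 < π i) (h1 : ∑ i, π i = 1)
    (B : Fin n → Matrix (Fin c) (Fin c) ℝ) (hB : ∀ i, (B i)ᵀ = B i)
    (hz : ∑ i, π i • B i = 0) (s : Fin m) (k : ℕ) :
    ∑ ω : Fin m → Fin n, samplingP π ω * (B (ω s) * (∑ r, B (ω r)) ^ (2 * k + 1)).trace ≤
      (2 * k + 1) / 2 * ∑ ω : Fin m → Fin n, samplingP π ω *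
        ((B (ω s) * B (ω s) + ∑ i, π i • (B i * B i)) * (∑ r, B (ω r)) ^ (2 * k)).trace := by
  let W : (Fin m → Fin n) → Matrix (Fin c) (Fin c) ℝ := fun ω => ∑ r, B (ω r)
  have hW : ∀ ω, (W ω)ᵀ = W ω := fun ω => by
    simp only [W, transpose_sum, hB]
  have hd : ∀ ω i, W ω - W (Function.update ω s i) = B (ω s) - B i := fun ω i => by
    simp only [W]
    rw [← Finset.add_sum_erase univ _ (Finset.mem_univ s),
      ← Finset.add_sum_erase univ (fun r => B (Function.update ω s i r)) (Finset.mem_univ s)]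
    have : ∑ r ∈ univ.erase s, B (Function.update ω s i r) = ∑ r ∈ univ.erase s, B (ω r) :=
      Finset.sum_congr rfl fun r hr => by rw [Function.update_of_ne (Finset.ne_of_mem_erase hr)]
    rw [this, Function.update_self]
    abel
  let Φ : (Fin m → Fin n) → (Fin m → Fin n) → ℝ :=
    fun ω ω' => ((B (ω s) - B (ω' s)) * W ω ^ (2 * k + 1)).trace
  let Ψ : (Fin m → Fin n) → (Fin m → Fin n) → ℝ :=
    fun ω ω' => ((B (ω s) - B (ω' s)) * (B (ω s) - B (ω' s)) * W ω ^ (2 * k)).trace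
  have hΦ : ∀ ω, ∑ i, π i * Φ ω (Function.update ω s i) =
      (B (ω s) * W ω ^ (2 * k + 1)).trace := fun ω => by
    have e : ∀ i, π i * Φ ω (Function.update ω s i) =
        ((π i • B (ω s) - π i • B i) * W ω ^ (2 * k + 1)).trace := fun i => by
      simp only [Φ, Function.update_self]
      rw [← smul_sub, Matrix.smul_mul, trace_smul, smul_eq_mul]
    simp_rw [e]
    rw [← trace_sum, ← Finset.sum_mul, Finset.sum_sub_distrib, hz, ← Finset.sum_smul, h1,
      one_smul, sub_zero]
  have hΨ : ∀ ω, ∑ i, π i * Ψ ω (Function.update ω s i) =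
      ((B (ω s) * B (ω s) + ∑ i, π i • (B i * B i)) * W ω ^ (2 * k)).trace := fun ω => by
    have e : ∀ i, π i * Ψ ω (Function.update ω s i) =
        ((π i • (B (ω s) * B (ω s)) - B (ω s) * (π i • B i) - (π i • B i) * B (ω s)
          + π i • (B i * B i)) * W ω ^ (2 * k)).trace := fun i => by
      simp only [Ψ, Function.update_self]
      rw [← smul_eq_mul, ← trace_smul, ← Matrix.smul_mul]
      congr 2
      simp only [Matrix.sub_mul, Matrix.mul_sub, smul_sub, Matrix.mul_smul, Matrix.smul_mul]
      abel
    simp_rw [e]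
    rw [← trace_sum, ← Finset.sum_mul, Finset.sum_add_distrib, Finset.sum_sub_distrib,
      Finset.sum_sub_distrib, ← Finset.mul_sum, ← Finset.sum_mul, hz, ← Finset.sum_smul, h1,
      one_smul, Matrix.mul_zero, Matrix.zero_mul, sub_zero, sub_zero]
  have key : ∀ ω i, Φ ω (Function.update ω s i) + Φ (Function.update ω s i) ω ≤
      (2 * k + 1) / 2 * (Ψ ω (Function.update ω s i) + Ψ (Function.update ω s i) ω) := by
    intro ω i
    have h := trace_sub_mul_pow_le (hW ω) (hW (Function.update ω s i)) k
    have hd' : W (Function.update ω s i) - W ω = B i - B (ω s) := by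
      rw [← neg_sub, hd, neg_sub]
    rw [hd, hd'] at h
    simp only [Φ, Ψ, Function.update_self]
    refine le_trans (le_of_eq ?_) h
    rw [Matrix.mul_sub, trace_sub, Matrix.sub_mul, Matrix.sub_mul, Matrix.sub_mul, trace_sub,
      trace_sub, trace_sub]
    ring
  have sΦ := resample_swap π s Φ
  have sΨ := resample_swap π s Ψ
  have tot : ∑ ω, samplingP π ω * ∑ i, π i *
      (Φ ω (Function.update ω s i) + Φ (Function.update ω s i) ω) ≤
      ∑ ω, samplingP π ω * ∑ i, π i *
      ((2 * k + 1) / 2 * (Ψ ω (Function.update ω s i) + Ψ (Function.update ω s i) ω)) :=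
    Finset.sum_le_sum fun ω _ => mul_le_mul_of_nonneg_left
      (Finset.sum_le_sum fun i _ => mul_le_mul_of_nonneg_left (key ω i) (h0 i).le)
      (samplingP_nonneg h0 ω)
  have tot2 : ∑ ω, samplingP π ω * ∑ i, π i *
      ((2 * k + 1) / 2 * (Ψ ω (Function.update ω s i) + Ψ (Function.update ω s i) ω)) =
      (2 * k + 1) / 2 * ∑ ω, samplingP π ω * ∑ i, π i *
      (Ψ ω (Function.update ω s i) + Ψ (Function.update ω s i) ω) := by
    simp_rw [Finset.mul_sum]
    refine Finset.sum_congr rfl fun ω _ => Finset.sum_congr rfl fun i _ => ?_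
    ring
  rw [tot2] at tot
  simp only [mul_add (π _), Finset.sum_add_distrib, mul_add (samplingP π _)] at tot
  rw [← sΦ, ← sΨ] at tot
  simp only [hΦ, hΨ] at tot
  simp only [W] at tot
  linarith

/-- Moment bound for a sum `W` of i.i.d. centred random symmetric matrices whose quadratic variation
is controlled by `t (W + 2)`. -/
lemma expect_trace_pow_le {n m c : ℕ} {π : Fin n → ℝ} (h0 : ∀ i, 0 < π i) (h1 : ∑ i, π i = 1)
    (B : Fin n → Matrix (Fin c) (Fin c) ℝ) (hB : ∀ i, (B i)ᵀ = B i)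
    (hz : ∑ i, π i • B i = 0) {t : ℝ} (ht : 0 ≤ t)
    (hV : ∀ ω : Fin m → Fin n, (t • (∑ r, B (ω r)) + (2 * t) • (1 : Matrix (Fin c) (Fin c) ℝ) -
      (∑ s, (B (ω s) * B (ω s) + ∑ i, π i • (B i * B i)))).PosSemidef)
    {K : ℕ} (hK : K * t ≤ 1) {k : ℕ} (hk : k ≤ K) :
    ∑ ω : Fin m → Fin n, samplingP π ω * ((∑ r, B (ω r)) ^ (2 * k)).trace ≤
      (5 * (K * t)) ^ k * c := by
  induction k with
  | zero => simp [← Finset.sum_mul, sum_samplingP h1]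
  | succ k ih =>
    have ih := ih (by omega)
    let W : (Fin m → Fin n) → Matrix (Fin c) (Fin c) ℝ := fun ω => ∑ r, B (ω r)
    have hW : ∀ ω, (W ω)ᵀ = W ω := fun ω => by
      simp only [W, transpose_sum, hB]
    change ∑ ω, samplingP π ω * (W ω ^ (2 * k)).trace ≤ _ at ih
    change ∑ ω, samplingP π ω * (W ω ^ (2 * k + 2)).trace ≤ _
    set e0 := ∑ ω, samplingP π ω * (W ω ^ (2 * k)).trace with he0
    set e2 := ∑ ω, samplingP π ω * (W ω ^ (2 * k + 2)).trace with he2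
    have h2 : e2 = ∑ s, ∑ ω : Fin m → Fin n,
        samplingP π ω * (B (ω s) * W ω ^ (2 * k + 1)).trace := by
      rw [Finset.sum_comm]
      refine Finset.sum_congr rfl fun ω _ => ?_
      rw [← Finset.mul_sum, ← trace_sum, ← Finset.sum_mul, pow_succ' (W ω) (2 * k + 1)]
    have h3 : e2 ≤ (2 * k + 1) / 2 * ∑ ω, samplingP π ω *
        ((∑ s, (B (ω s) * B (ω s) + ∑ i, π i • (B i * B i))) * W ω ^ (2 * k)).trace := by
      rw [h2]
      refine (Finset.sum_le_sum fun s _ => expect_trace_step h0 h1 B hB hz s k).trans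
        (le_of_eq ?_)
      rw [← Finset.mul_sum, Finset.sum_comm]
      congr 1
      refine Finset.sum_congr rfl fun ω _ => ?_
      rw [← Finset.mul_sum, ← trace_sum, ← Finset.sum_mul]
    have h4 : ∑ ω, samplingP π ω *
        ((∑ s, (B (ω s) * B (ω s) + ∑ i, π i • (B i * B i))) * W ω ^ (2 * k)).trace ≤
        ∑ ω, samplingP π ω * (t / 2 * (W ω ^ (2 * k + 2)).trace +
          5 / 2 * t * (W ω ^ (2 * k)).trace) := by
      refine Finset.sum_le_sum fun ω _ => mul_le_mul_of_nonneg_left ?_ (samplingP_nonneg h0 ω)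
      have := trace_mul_even_pow_nonneg (hV ω) (hW ω) k
      rw [Matrix.sub_mul, trace_sub, Matrix.add_mul, trace_add, Matrix.smul_mul, Matrix.smul_mul,
        trace_smul, trace_smul, Matrix.one_mul, smul_eq_mul, smul_eq_mul] at this
      change 0 ≤ t * (W ω * W ω ^ (2 * k)).trace + _ - _ at this
      rw [← pow_succ'] at this
      nlinarith [trace_odd_pow_le (hW ω) k]
    have h5 : ∑ ω, samplingP π ω * (t / 2 * (W ω ^ (2 * k + 2)).trace +
          5 / 2 * t * (W ω ^ (2 * k)).trace) = t / 2 * e2 + 5 / 2 * t * e0 := by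
      rw [he0, he2, Finset.mul_sum, Finset.mul_sum, ← Finset.sum_add_distrib]
      refine Finset.sum_congr rfl fun ω _ => ?_
      ring
    have n2 : 0 ≤ e2 := Finset.sum_nonneg fun ω _ => mul_nonneg (samplingP_nonneg h0 ω) (by
      have := trace_mul_even_pow_nonneg PosSemidef.one (hW ω) (k + 1)
      rwa [Matrix.one_mul] at this)
    have n0 : 0 ≤ e0 := Finset.sum_nonneg fun ω _ => mul_nonneg (samplingP_nonneg h0 ω) (by
      have := trace_mul_even_pow_nonneg PosSemidef.one (hW ω) k
      rwa [Matrix.one_mul] at this)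
    have hkK : (k : ℝ) + 1 ≤ K := by exact_mod_cast hk
    have hkt : (2 * k + 1) * t ≤ 2 * (K * t) := by nlinarith
    have h6 : e2 ≤ (2 * k + 1) / 2 * (t / 2 * e2 + 5 / 2 * t * e0) := by
      rw [← h5]
      exact h3.trans (mul_le_mul_of_nonneg_left h4 (by positivity))
    have h7 : e2 ≤ 5 * (K * t) * e0 := by
      nlinarith [mul_le_mul_of_nonneg_right hkt n2, mul_le_mul_of_nonneg_right hkt n0,
        mul_le_mul_of_nonneg_right hK n2]
    calc e2 ≤ 5 * (K * t) * e0 := h7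
      _ ≤ 5 * (K * t) * ((5 * (K * t)) ^ k * c) :=
        mul_le_mul_of_nonneg_left ih (by positivity)
      _ = _ := by ring

/-! ### Frobenius norms -/

/-- The squared Frobenius norm as the sum of the squared entries. -/
def fsq {k l : ℕ} (A : Matrix (Fin k) (Fin l) ℝ) : ℝ := ∑ i, ∑ j, A i j ^ 2

lemma fsq_nonneg {k l : ℕ} (A : Matrix (Fin k) (Fin l) ℝ) : 0 ≤ fsq A :=
  Finset.sum_nonneg fun _ _ => Finset.sum_nonneg fun _ _ => sq_nonneg _

lemma trace_transpose_mul_self_eq_fsq {k l : ℕ} (A : Matrix (Fin k) (Fin l) ℝ) :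
    (Aᵀ * A).trace = fsq A := by
  simp only [fsq, trace, diag_apply, Matrix.mul_apply, transpose_apply]
  rw [Finset.sum_comm]
  simp [sq]

lemma frobNorm_eq {k l : ℕ} (A : Matrix (Fin k) (Fin l) ℝ) : frobNorm A = √(fsq A) := by
  rw [frobNorm, trace_transpose_mul_self_eq_fsq]

lemma frobNorm_sq {k l : ℕ} (A : Matrix (Fin k) (Fin l) ℝ) : frobNorm A ^ 2 = fsq A := by
  rw [frobNorm_eq, Real.sq_sqrt (fsq_nonneg A)]

lemma fsq_transpose {k l : ℕ} (A : Matrix (Fin k) (Fin l) ℝ) : fsq Aᵀ = fsq A := by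
  simp only [fsq, transpose_apply]; exact Finset.sum_comm

lemma fsq_neg {k l : ℕ} (A : Matrix (Fin k) (Fin l) ℝ) : fsq (-A) = fsq A := by
  simp [fsq]

lemma fsq_sub_le {k l : ℕ} (A B : Matrix (Fin k) (Fin l) ℝ) :
    fsq (A - B) ≤ 2 * fsq A + 2 * fsq B := by
  simp only [fsq, Finset.mul_sum, ← Finset.sum_add_distrib]
  refine Finset.sum_le_sum fun i _ => Finset.sum_le_sum fun j _ => ?_
  rw [Matrix.sub_apply]
  nlinarith [sq_nonneg (A i j + B i j)]

/-- Weighted Minkowski inequality for square sums. -/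
lemma minkowski {κ : Type*} (s : Finset κ) (w f g : κ → ℝ) (hw : ∀ x ∈ s, 0 ≤ w x) {a b : ℝ}
    (ha : 0 ≤ a) (hb : 0 ≤ b) (hf : ∑ x ∈ s, w x * f x ^ 2 ≤ a ^ 2)
    (hg : ∑ x ∈ s, w x * g x ^ 2 ≤ b ^ 2) :
    ∑ x ∈ s, w x * (f x + g x) ^ 2 ≤ (a + b) ^ 2 := by
  have h1 : (∑ x ∈ s, w x * (f x * g x)) ^ 2 ≤
      (∑ x ∈ s, w x * f x ^ 2) * (∑ x ∈ s, w x * g x ^ 2) :=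
    Finset.sum_sq_le_sum_mul_sum_of_sq_le_mul s
      (fun x hx => mul_nonneg (hw x hx) (sq_nonneg _))
      (fun x hx => mul_nonneg (hw x hx) (sq_nonneg _)) (fun x _ => le_of_eq (by ring))
  have h2 : ∑ x ∈ s, w x * (f x * g x) ≤ a * b := by
    refine le_of_sq_le_sq ?_ (mul_nonneg ha hb)
    rw [mul_pow]
    refine h1.trans (mul_le_mul hf hg ?_ (sq_nonneg _))
    exact Finset.sum_nonneg fun x hx => mul_nonneg (hw x hx) (sq_nonneg _)
  have h3 : ∑ x ∈ s, w x * (f x + g x) ^ 2 = ∑ x ∈ s, w x * f x ^ 2 +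
      2 * ∑ x ∈ s, w x * (f x * g x) + ∑ x ∈ s, w x * g x ^ 2 := by
    rw [Finset.mul_sum, ← Finset.sum_add_distrib, ← Finset.sum_add_distrib]
    exact Finset.sum_congr rfl fun x _ => by ring
  rw [h3]
  nlinarith

lemma fsq_add_le {k l : ℕ} (A B : Matrix (Fin k) (Fin l) ℝ) :
    fsq (A + B) ≤ (√(fsq A) + √(fsq B)) ^ 2 := by
  have := minkowski (univ : Finset (Fin k × Fin l)) (fun _ => 1) (fun x => A x.1 x.2)
    (fun x => B x.1 x.2) (fun _ _ => zero_le_one) (Real.sqrt_nonneg (fsq A))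
    (Real.sqrt_nonneg (fsq B))
  simp only [one_mul, Fintype.sum_prod_type] at this
  exact this (Real.sq_sqrt (fsq_nonneg A)).ge (Real.sq_sqrt (fsq_nonneg B)).ge

lemma minkowski_fsq {κ : Type*} (s : Finset κ) (w : κ → ℝ) {k l : ℕ}
    (A B : κ → Matrix (Fin k) (Fin l) ℝ) (hw : ∀ x ∈ s, 0 ≤ w x) {a b : ℝ}
    (ha : 0 ≤ a) (hb : 0 ≤ b) (hA : ∑ x ∈ s, w x * fsq (A x) ≤ a ^ 2)
    (hB : ∑ x ∈ s, w x * fsq (B x) ≤ b ^ 2) :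
    ∑ x ∈ s, w x * fsq (A x + B x) ≤ (a + b) ^ 2 := by
  refine (Finset.sum_le_sum fun x hx => mul_le_mul_of_nonneg_left (fsq_add_le (A x) (B x))
    (hw x hx)).trans (minkowski s w _ _ hw ha hb ?_ ?_)
  · simpa only [Real.sq_sqrt (fsq_nonneg _)] using hA
  · simpa only [Real.sq_sqrt (fsq_nonneg _)] using hB

lemma fsq_orthonormal_mul {n c q : ℕ} {U : Matrix (Fin n) (Fin c) ℝ} (hU : Uᵀ * U = 1)
    (A : Matrix (Fin c) (Fin q) ℝ) : fsq (U * A) = fsq A := by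
  rw [← trace_transpose_mul_self_eq_fsq, ← trace_transpose_mul_self_eq_fsq, transpose_mul,
    Matrix.mul_assoc, ← Matrix.mul_assoc Uᵀ, hU, Matrix.one_mul]

/-- Pythagoras for the orthogonal projection onto the column space of `U`. -/
lemma fsq_pythagoras {n c q : ℕ} {U : Matrix (Fin n) (Fin c) ℝ} (hU : Uᵀ * U = 1)
    (A : Matrix (Fin n) (Fin q) ℝ) : fsq A = fsq (Uᵀ * A) + fsq (A - U * (Uᵀ * A)) := by
  rw [← fsq_orthonormal_mul hU (Uᵀ * A)]
  simp only [← trace_transpose_mul_self_eq_fsq]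
  set Z := U * (Uᵀ * A) with hZ
  have e : Uᵀ * (A - Z) = 0 := by
    rw [Matrix.mul_sub, hZ, ← Matrix.mul_assoc Uᵀ U, hU, Matrix.one_mul, sub_self]
  have e1 : Zᵀ * (A - Z) = 0 := by
    rw [hZ, transpose_mul, Matrix.mul_assoc, ← hZ, e, Matrix.mul_zero]
  have e2 : (A - Z)ᵀ * Z = 0 := by
    rw [← transpose_transpose ((A - Z)ᵀ * Z), transpose_mul, transpose_transpose, e1,
      transpose_zero]
  have : Aᵀ * A = (Z + (A - Z))ᵀ * (Z + (A - Z)) := by rw [add_sub_cancel]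
  rw [this, transpose_add, Matrix.add_mul, Matrix.mul_add, Matrix.mul_add, e1, e2]
  simp

lemma fsq_transpose_mul_le {n c q : ℕ} {U : Matrix (Fin n) (Fin c) ℝ} (hU : Uᵀ * U = 1)
    (A : Matrix (Fin n) (Fin q) ℝ) : fsq (Uᵀ * A) ≤ fsq A := by
  rw [fsq_pythagoras hU A]; linarith [fsq_nonneg (A - U * (Uᵀ * A))]

lemma fsq_compl_le {n c q : ℕ} {U : Matrix (Fin n) (Fin c) ℝ} (hU : Uᵀ * U = 1)
    (A : Matrix (Fin n) (Fin q) ℝ) : fsq (A - U * (Uᵀ * A)) ≤ fsq A := by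
  rw [fsq_pythagoras hU A]; linarith [fsq_nonneg (Uᵀ * A)]

lemma fsq_diagonal_mul_le {n q : ℕ} {d : Fin n → ℝ} {x : ℝ} (hd0 : ∀ i, 0 ≤ d i)
    (hd : ∀ i, d i ≤ x) (A : Matrix (Fin n) (Fin q) ℝ) :
    fsq (diagonal d * A) ≤ x ^ 2 * fsq A := by
  simp only [fsq, Finset.mul_sum]
  refine Finset.sum_le_sum fun i _ => Finset.sum_le_sum fun j _ => ?_
  rw [diagonal_mul, mul_pow]
  exact mul_le_mul_of_nonneg_right (pow_le_pow_left₀ (hd0 i) (hd i) 2) (sq_nonneg _)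

lemma fsq_smul {k l : ℕ} (x : ℝ) (A : Matrix (Fin k) (Fin l) ℝ) : fsq (x • A) = x ^ 2 * fsq A := by
  simp [fsq, Finset.mul_sum, mul_pow]

/-- A matrix whose quadratic form is at least `1/2` is invertible, and its inverse at most doubles
Frobenius norms. -/
lemma inverse_of_half_le {c : ℕ} {H : Matrix (Fin c) (Fin c) ℝ}
    (hH : ∀ v : Fin c → ℝ, 1 / 2 * (v ⬝ᵥ v) ≤ v ⬝ᵥ H *ᵥ v) :
    IsUnit H.det ∧ ∀ (q : ℕ) (A : Matrix (Fin c) (Fin q) ℝ), fsq (H⁻¹ * A) ≤ 4 * fsq A := by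
  have hu : IsUnit H.det := by
    rw [isUnit_iff_ne_zero]
    intro h
    obtain ⟨v, hv, hv0⟩ := exists_mulVec_eq_zero_iff.2 h
    have := hH v
    rw [hv0, dotProduct_zero] at this
    have h2 : 0 < v ⬝ᵥ v := by
      rcases (Finset.sum_nonneg fun i _ => mul_self_nonneg (v i) : 0 ≤ v ⬝ᵥ v).lt_or_eq with h | h
      · exact h
      · exact absurd (dotProduct_self_eq_zero.1 h.symm) hv
    linarith
  refine ⟨hu, fun q A => ?_⟩
  have hv : ∀ v : Fin c → ℝ, v ⬝ᵥ v ≤ 4 * (H *ᵥ v ⬝ᵥ H *ᵥ v) := fun v => by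
    have h1 := hH v
    have h2 : 0 ≤ (v - (2 : ℝ) • H *ᵥ v) ⬝ᵥ (v - (2 : ℝ) • H *ᵥ v) :=
      Finset.sum_nonneg fun i _ => mul_self_nonneg _
    simp only [sub_dotProduct, dotProduct_sub, smul_dotProduct, dotProduct_smul, smul_eq_mul] at h2
    rw [dotProduct_comm (H *ᵥ v) v] at h2
    nlinarith
  rw [← fsq_transpose, ← fsq_transpose A]
  simp only [fsq, transpose_apply]
  rw [Finset.mul_sum]
  refine Finset.sum_le_sum fun j _ => ?_
  have h := hv (fun i => (H⁻¹ * A) i j)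
  have e : H *ᵥ (fun i => (H⁻¹ * A) i j) = fun i => A i j := by
    have e1 : H * (H⁻¹ * A) = A := by
      rw [← Matrix.mul_assoc, Matrix.mul_nonsing_inv _ hu, Matrix.one_mul]
    funext i
    conv_rhs => rw [← e1]
    rfl
  rw [e] at h
  simpa [dotProduct, sq] using h

/-! ### Sampled Gram matrices and subspace embedding -/

/-- The weighted Gram matrix `∑ₛ a(ω s) · A_{ω s}ᵀ B_{ω s}` of the sampled rows of `A` and `B`. -/
def sgram {n m c q : ℕ} (a : Fin n → ℝ) (ω : Fin m → Fin n) (A : Matrix (Fin n) (Fin c) ℝ)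
    (B : Matrix (Fin n) (Fin q) ℝ) : Matrix (Fin c) (Fin q) ℝ :=
  Matrix.of fun k l => ∑ s, a (ω s) * (A (ω s) k * B (ω s) l)

lemma sum_vecMulVec_row {n c : ℕ} (U : Matrix (Fin n) (Fin c) ℝ) :
    ∑ i, vecMulVec (U i) (U i) = Uᵀ * U := by
  ext k l
  simp [Matrix.sum_apply, vecMulVec_apply, Matrix.mul_apply]

lemma sgram_eq_sum {n m c : ℕ} (a : Fin n → ℝ) (ω : Fin m → Fin n)
    (U : Matrix (Fin n) (Fin c) ℝ) :
    sgram a ω U U = ∑ s, a (ω s) • vecMulVec (U (ω s)) (U (ω s)) := by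
  ext k l
  simp [sgram, Matrix.sum_apply, vecMulVec_apply]

lemma dotProduct_sgram {n m c : ℕ} (a : Fin n → ℝ) (ω : Fin m → Fin n)
    (U : Matrix (Fin n) (Fin c) ℝ) (v : Fin c → ℝ) :
    v ⬝ᵥ sgram a ω U U *ᵥ v = ∑ s, a (ω s) * (U (ω s) ⬝ᵥ v) ^ 2 := by
  rw [sgram_eq_sum, Matrix.sum_mulVec, dotProduct_sum]
  refine Finset.sum_congr rfl fun s _ => ?_
  rw [Matrix.smul_mulVec, Matrix.vecMulVec_mulVec, dotProduct_smul, dotProduct_comm v]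
  simp [sq]

/-- The variance proxy of the centred rank-one terms is dominated by the sampled sum itself:
this is what lets the trace-moment recursion close. -/
lemma variance_proxy {n m c : ℕ} {π : Fin n → ℝ} (h0 : ∀ i, 0 < π i) (h1 : ∑ i, π i = 1)
    {U : Matrix (Fin n) (Fin c) ℝ} (hU : Uᵀ * U = 1) (hm : 0 < m) {t : ℝ}
    (ht : ∀ i, U i ⬝ᵥ U i ≤ t * (m * π i)) (B : Fin n → Matrix (Fin c) (Fin c) ℝ)
    (hB : B = fun i => (1 / (m * π i)) • vecMulVec (U i) (U i) -
      (1 / (m : ℝ)) • (1 : Matrix (Fin c) (Fin c) ℝ)) (ω : Fin m → Fin n) :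
    (t • (∑ r, B (ω r)) + (2 * t) • (1 : Matrix (Fin c) (Fin c) ℝ) -
      (∑ s, (B (ω s) * B (ω s) + ∑ i, π i • (B i * B i)))).PosSemidef := by
  have hm' : (0 : ℝ) < m := by exact_mod_cast hm
  set x : Fin n → Matrix (Fin c) (Fin c) ℝ := fun i => vecMulVec (U i) (U i) with hx
  set a : Fin n → ℝ := fun i => 1 / (m * π i) with ha
  set τ : Fin n → ℝ := fun i => a i * (U i ⬝ᵥ U i) with hτ
  have hxx : ∀ i, x i * x i = (U i ⬝ᵥ U i) • x i := by
    intro i; ext k l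
    simp [hx, Matrix.mul_apply, vecMulVec_apply, dotProduct, Finset.sum_mul]
    refine Finset.sum_congr rfl fun j _ => by ring
  have hsum : ∑ i, x i = 1 := by rw [hx, sum_vecMulVec_row, hU]
  have hBB : ∀ i, B i * B i = (a i * τ i - 2 * a i / m) • x i +
      (1 / (m : ℝ) ^ 2) • (1 : Matrix (Fin c) (Fin c) ℝ) := by
    intro i
    have : B i = a i • x i - (1 / (m : ℝ)) • (1 : Matrix (Fin c) (Fin c) ℝ) := by rw [hB]
    rw [this, sub_mul, mul_sub, mul_sub]
    simp only [smul_mul_assoc, mul_smul_comm, one_mul, mul_one, hxx, hτ]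
    module
  have hpa : ∀ i, π i * a i = 1 / m := by
    intro i; have := h0 i; simp only [ha]; field_simp
  have hE : ∑ i, π i • (B i * B i) = (1 / (m : ℝ)) • ∑ i, τ i • x i -
      (1 / (m : ℝ) ^ 2) • (1 : Matrix (Fin c) (Fin c) ℝ) := by
    have e1 : ∀ i, π i • (B i * B i) = (1 / (m : ℝ)) • (τ i • x i) - (2 / (m : ℝ) ^ 2) • x i +
        π i • ((1 / (m : ℝ) ^ 2) • (1 : Matrix (Fin c) (Fin c) ℝ)) := by
      intro i
      rw [hBB, smul_add, smul_smul, smul_smul, smul_smul (1 / (m : ℝ)), ← sub_smul]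
      congr 2
      linear_combination (τ i - 2 / m) * hpa i
    simp_rw [e1]
    rw [Finset.sum_add_distrib, Finset.sum_sub_distrib, ← Finset.smul_sum, ← Finset.smul_sum,
      ← Finset.sum_smul, hsum, h1]
    module
  have key : t • (∑ r, B (ω r)) + (2 * t) • (1 : Matrix (Fin c) (Fin c) ℝ) -
      (∑ s, (B (ω s) * B (ω s) + ∑ i, π i • (B i * B i))) =
      ∑ s, ((t - τ (ω s) + 2 / m) * a (ω s)) • x (ω s) + ∑ i, (t - τ i) • x i := by
    have e2 : ∑ i, (t - τ i) • x i = t • (1 : Matrix (Fin c) (Fin c) ℝ) - ∑ i, τ i • x i := by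
      simp_rw [sub_smul]; rw [Finset.sum_sub_distrib, ← Finset.smul_sum, hsum]
    have e3 : ∑ s, (B (ω s) * B (ω s) + ∑ i, π i • (B i * B i)) =
        ∑ s, (a (ω s) * τ (ω s) - 2 * a (ω s) / m) • x (ω s) + ∑ i, τ i • x i := by
      rw [Finset.sum_add_distrib, hE]
      simp_rw [hBB]
      rw [Finset.sum_add_distrib]
      simp only [Finset.sum_const, Finset.card_univ, Fintype.card_fin, ← Nat.cast_smul_eq_nsmul ℝ]
      match_scalars <;> field_simp <;> ring
    have e4 : t • (∑ r, B (ω r)) = t • ∑ s, a (ω s) • x (ω s) -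
        t • (1 : Matrix (Fin c) (Fin c) ℝ) := by
      rw [hB]
      simp only [Finset.sum_sub_distrib]
      simp only [Finset.sum_const, Finset.card_univ, Fintype.card_fin, ← Nat.cast_smul_eq_nsmul ℝ]
      match_scalars <;> field_simp
    have e5 : ∑ s, ((t - τ (ω s) + 2 / m) * a (ω s)) • x (ω s) =
        t • ∑ s, a (ω s) • x (ω s) -
        ∑ s, (a (ω s) * τ (ω s) - 2 * a (ω s) / m) • x (ω s) := by
      rw [Finset.smul_sum, ← Finset.sum_sub_distrib]
      refine Finset.sum_congr rfl fun s _ => ?_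
      module
    rw [e5, e2, e3, e4]
    module
  rw [key]
  have hxp : ∀ i, (x i).PosSemidef := fun i => by
    simpa using Matrix.posSemidef_vecMulVec_self_star (U i)
  have hτt : ∀ i, τ i ≤ t := by
    intro i
    have := h0 i
    have h2 := ht i
    simp only [hτ, ha]
    rw [one_div, inv_mul_le_iff₀ (by positivity)]; linarith
  refine Matrix.PosSemidef.add (Matrix.posSemidef_sum _ fun s _ => (hxp _).smul ?_)
    (Matrix.posSemidef_sum _ fun s _ => (hxp _).smul (sub_nonneg.2 (hτt s)))
  have := h0 (ω s)
  have := hτt (ω s)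
  have : 0 ≤ 2 / (m : ℝ) := by positivity
  have : 0 ≤ a (ω s) := by simp only [ha]; positivity
  apply mul_nonneg <;> linarith

/-- A small high trace moment bounds the smallest eigenvalue from below. -/
lemma quadratic_ge_of_trace_pow_le {c K : ℕ} (hK : K ≠ 0) {W : Matrix (Fin c) (Fin c) ℝ}
    (hW : Wᵀ = W) (h : (W ^ (2 * K)).trace ≤ (1 / 4) ^ K) (v : Fin c → ℝ) :
    -(1 / 2) * (v ⬝ᵥ v) ≤ v ⬝ᵥ W *ᵥ v := by
  obtain ⟨O, l, hO, hO', hp⟩ := exists_diag hW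
  have htr : (W ^ (2 * K)).trace = ∑ a, (l a ^ 2) ^ K := by
    rw [hp, Matrix.trace_mul_cycle, hO, one_mul, Matrix.trace_diagonal]
    simp [pow_mul]
  have hl : ∀ a, -(1 / 2) ≤ l a := by
    intro a
    have h1 : (l a ^ 2) ^ K ≤ (1 / 4) ^ K := by
      refine le_trans ?_ (htr ▸ h)
      exact Finset.single_le_sum (f := fun a => (l a ^ 2) ^ K) (fun b _ => by positivity)
        (Finset.mem_univ a)
    have h2 := le_of_pow_le_pow_left₀ hK (by norm_num) h1
    nlinarith
  have hW1 : W = O * diagonal l * Oᵀ := by simpa using hp 1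
  have e1 : v ⬝ᵥ W *ᵥ v = ∑ a, l a * (Oᵀ *ᵥ v) a ^ 2 := by
    rw [hW1, ← Matrix.mulVec_mulVec, ← Matrix.mulVec_mulVec, Matrix.dotProduct_mulVec,
      ← Matrix.mulVec_transpose]
    simp only [dotProduct, Matrix.mulVec_diagonal]
    refine Finset.sum_congr rfl fun a _ => by ring
  have e2 : v ⬝ᵥ v = ∑ a, (Oᵀ *ᵥ v) a ^ 2 := by
    have : (Oᵀ *ᵥ v) ⬝ᵥ (Oᵀ *ᵥ v) = v ⬝ᵥ v := by
      rw [Matrix.dotProduct_mulVec, ← Matrix.mulVec_transpose, Matrix.mulVec_mulVec,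
        Matrix.transpose_transpose, hO', Matrix.one_mulVec]
    rw [← this]; simp [dotProduct, sq]
  rw [e1, e2, Finset.mul_sum]
  exact Finset.sum_le_sum fun a _ => mul_le_mul_of_nonneg_right (hl a) (sq_nonneg _)

lemma sixty_mul_le {K : ℕ} (hK : 2 ≤ K) : (60 * K : ℝ) ≤ 1000 ^ (K - 1) := by
  obtain ⟨k, rfl⟩ := Nat.exists_eq_add_of_le hK
  induction k with
  | zero => norm_num
  | succ k ih =>
    have := ih (by omega)
    have e : 2 + (k + 1) - 1 = (2 + k - 1) + 1 := by omega
    rw [e, pow_succ]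
    push_cast at this ⊢
    nlinarith [(k.cast_nonneg : (0 : ℝ) ≤ k)]

/-- Subspace embedding: outside an event of probability at most `t δ`, the sampled Gram matrix is
bounded below by one half of the identity. -/
lemma exists_event {n m c : ℕ} {π : Fin n → ℝ} (h0 : ∀ i, 0 < π i) (h1 : ∑ i, π i = 1)
    {U : Matrix (Fin n) (Fin c) ℝ} (hU : Uᵀ * U = 1) (hm : 0 < m) {t : ℝ} (ht0 : 0 ≤ t)
    (ht : ∀ i, U i ⬝ᵥ U i ≤ t * (m * π i)) (hc : 0 < c) {δ : ℝ} (hδ0 : 0 < δ)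
    (hδ1 : δ ≤ 1 / 27) (hC : 120000 * t * Real.log (c / δ) ≤ 1) :
    t ≤ 1 / 120000 ∧ ∃ ζ : Finset (Fin m → Fin n), 1 - t * δ ≤ ∑ ω ∈ ζ, samplingP π ω ∧
      ∀ ω ∈ ζ, ∀ v : Fin c → ℝ,
        1 / 2 * (v ⬝ᵥ v) ≤ v ⬝ᵥ sgram (fun i => 1 / (m * π i)) ω U U *ᵥ v := by
  have hm' : (0 : ℝ) < m := by exact_mod_cast hm
  have hc1 : (1 : ℝ) ≤ c := by exact_mod_cast hc
  set Λ := Real.log (c / δ) with hΛ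
  have hΛ2 : 2 ≤ Λ := by
    rw [hΛ, Real.le_log_iff_exp_le (by positivity), le_div_iff₀ hδ0]
    have e1 : Real.exp 2 ≤ 9 := by
      have := Real.exp_one_lt_d9
      have e : Real.exp 2 = Real.exp 1 * Real.exp 1 := by rw [← Real.exp_add]; norm_num
      rw [e]; nlinarith [Real.exp_pos 1]
    nlinarith [Real.exp_pos 2]
  have hts : t ≤ 1 / 120000 := by nlinarith
  refine ⟨hts, ?_⟩
  set K := ⌈Λ⌉₊ with hK
  have hK1 : Λ ≤ K := Nat.le_ceil _
  have hK2 : (K : ℝ) ≤ 2 * Λ := by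
    have := Nat.ceil_lt_add_one (by linarith : 0 ≤ Λ)
    linarith
  have hK3 : 2 ≤ K := by
    have : (2 : ℝ) ≤ K := hΛ2.trans hK1
    exact_mod_cast this
  have hKt : K * t ≤ 1 / 60000 := by nlinarith
  set B : Fin n → Matrix (Fin c) (Fin c) ℝ := fun i => (1 / (m * π i)) • vecMulVec (U i) (U i) -
      (1 / (m : ℝ)) • (1 : Matrix (Fin c) (Fin c) ℝ) with hB
  have hBs : ∀ i, (B i)ᵀ = B i := by
    intro i
    simp [hB, Matrix.transpose_sub, Matrix.transpose_smul, Matrix.transpose_vecMulVec]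
  have hz : ∑ i, π i • B i = 0 := by
    have e : ∀ i, π i • B i = (1 / (m : ℝ)) • vecMulVec (U i) (U i) -
        π i • ((1 / (m : ℝ)) • (1 : Matrix (Fin c) (Fin c) ℝ)) := by
      intro i
      have := h0 i
      simp only [hB, smul_sub, smul_smul]
      congr 2; field_simp
    simp_rw [e]
    rw [Finset.sum_sub_distrib, ← Finset.smul_sum, ← Finset.sum_smul, sum_vecMulVec_row, hU, h1]
    simp
  have hmom := expect_trace_pow_le h0 h1 B hBs hz ht0 (variance_proxy h0 h1 hU hm ht B hB)
    (K := K) (by linarith) le_rfl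
  have hWs : ∀ ω : Fin m → Fin n, (∑ r, B (ω r))ᵀ = ∑ r, B (ω r) := by
    intro ω; rw [Matrix.transpose_sum]; simp [hBs]
  have hnn : ∀ ω : Fin m → Fin n, 0 ≤ ((∑ r, B (ω r)) ^ (2 * K)).trace := by
    intro ω
    simpa using trace_mul_even_pow_nonneg (A := (1 : Matrix (Fin c) (Fin c) ℝ))
      Matrix.PosSemidef.one (hWs ω) K
  set ζ : Finset (Fin m → Fin n) :=
    univ.filter fun ω => ((∑ r, B (ω r)) ^ (2 * K)).trace ≤ (1 / 4) ^ K with hζ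
  refine ⟨ζ, ?_, ?_⟩
  · have hsplit : ∑ ω ∈ ζ, samplingP π ω + ∑ ω ∈ ζᶜ, samplingP π ω = 1 := by
      rw [Finset.sum_add_sum_compl, sum_samplingP h1]
    -- Markov's inequality for the `2K`-th trace moment.
    have hmk : (1 / 4 : ℝ) ^ K * ∑ ω ∈ ζᶜ, samplingP π ω ≤ (5 * (K * t)) ^ K * c := by
      refine le_trans ?_ hmom
      rw [Finset.mul_sum]
      refine le_trans ?_ (Finset.sum_le_sum_of_subset_of_nonneg (Finset.subset_univ ζᶜ)
        fun ω _ _ => mul_nonneg (samplingP_nonneg h0 ω) (hnn ω))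
      refine Finset.sum_le_sum fun ω hω => ?_
      rw [mul_comm]
      refine mul_le_mul_of_nonneg_left ?_ (samplingP_nonneg h0 ω)
      simp only [hζ, Finset.mem_compl, Finset.mem_filter, Finset.mem_univ, true_and, not_le] at hω
      exact hω.le
    have hcK : (c : ℝ) ≤ δ * 3 ^ K := by
      have h3 : (c : ℝ) / δ ≤ 3 ^ K := by
        have : (c : ℝ) / δ = Real.exp Λ := by rw [hΛ, Real.exp_log (by positivity)]
        rw [this]
        calc Real.exp Λ ≤ Real.exp K := Real.exp_le_exp.2 hK1
          _ = Real.exp 1 ^ K := by rw [← Real.exp_nat_mul, mul_one]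
          _ ≤ 3 ^ K := by
            have := Real.exp_one_lt_d9
            exact pow_le_pow_left₀ (Real.exp_pos 1).le (by linarith) K
      rw [div_le_iff₀ hδ0] at h3; linarith
    have hP : ∑ ω ∈ ζᶜ, samplingP π ω ≤ δ * (60 * (K * t)) ^ K := by
      have e1 : ∑ ω ∈ ζᶜ, samplingP π ω =
          4 ^ K * ((1 / 4 : ℝ) ^ K * ∑ ω ∈ ζᶜ, samplingP π ω) := by
        rw [← mul_assoc, ← mul_pow]; norm_num
      have e2 : (60 * (K * t)) ^ K = 4 ^ K * ((5 * (K * t)) ^ K * 3 ^ K) := by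
        rw [← mul_pow, ← mul_pow]; congr 1; ring
      rw [e1, e2]
      calc _ ≤ 4 ^ K * ((5 * (K * t)) ^ K * c) := by gcongr
        _ ≤ 4 ^ K * ((5 * (K * t)) ^ K * (δ * 3 ^ K)) := by gcongr
        _ = _ := by ring
    have hfin : (60 * (K * t)) ^ K ≤ t := by
      obtain ⟨k, hk⟩ : ∃ k, K = k + 1 := ⟨K - 1, by omega⟩
      have h60 := sixty_mul_le hK3
      have e0 : K - 1 = k := by omega
      rw [e0] at h60
      have hb : (60 * (K * t)) ^ k ≤ (1 / 1000) ^ k :=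
        pow_le_pow_left₀ (by positivity) (by linarith) k
      have e : (60 * (K * t)) ^ K = (60 * (K * t)) ^ k * (60 * K * t) := by
        conv_lhs => rw [hk, pow_succ]
        rw [← hk]; ring
      rw [e]
      calc _ ≤ (1 / 1000) ^ k * (1000 ^ k * t) := by
            gcongr
        _ = t := by rw [← mul_assoc, ← mul_pow]; norm_num
    nlinarith
  · intro ω hω v
    simp only [hζ, Finset.mem_filter, Finset.mem_univ, true_and] at hω
    have := quadratic_ge_of_trace_pow_le (by omega) (hWs ω) hω v
    have e : sgram (fun i => 1 / (m * π i)) ω U U =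
        ∑ r, B (ω r) + (1 : Matrix (Fin c) (Fin c) ℝ) := by
      rw [sgram_eq_sum]
      simp only [hB, Finset.sum_sub_distrib, Finset.sum_const, Finset.card_univ, Fintype.card_fin,
        ← Nat.cast_smul_eq_nsmul ℝ, smul_smul]
      have : (m : ℝ) * (1 / m) = 1 := by field_simp
      rw [this]; simp
    rw [e, Matrix.add_mulVec, dotProduct_add, Matrix.one_mulVec]
    linarith

/-! ### Debiasing and degenerate U-statistics -/

lemma sum_offdiag {m : ℕ} (h : Fin m → Fin m → ℝ) :
    (∑ r, ∑ s, if r = s then 0 else h r s) = ∑ r, ∑ s, h r s - ∑ s, h s s := by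
  have : ∀ r, (∑ s, if r = s then 0 else h r s) = ∑ s, h r s - h r r := by
    intro r
    have e : ∀ s, (if r = s then 0 else h r s) = h r s - if r = s then h r s else 0 := by
      intro s; split_ifs <;> simp
    simp_rw [e]
    rw [Finset.sum_sub_distrib]; simp
  simp_rw [this]
  rw [Finset.sum_sub_distrib]

lemma sum_variance_le {n : ℕ} {π : Fin n → ℝ} (h1 : ∑ i, π i = 1) (F : Fin n → ℝ) {μ : ℝ}
    (hμ : ∑ i, π i * F i = μ) : ∑ i, π i * (F i - μ) ^ 2 ≤ ∑ i, π i * F i ^ 2 := by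
  have e : ∑ i, π i * (F i - μ) ^ 2 = ∑ i, π i * F i ^ 2 - 2 * μ * ∑ i, π i * F i +
      μ ^ 2 * ∑ i, π i := by
    rw [Finset.mul_sum, Finset.mul_sum, ← Finset.sum_sub_distrib, ← Finset.sum_add_distrib]
    exact Finset.sum_congr rfl fun i _ => by ring
  rw [e, hμ, h1]; nlinarith [sq_nonneg μ]

lemma sum_transpose_mul_eq_zero {n c q : ℕ} {U : Matrix (Fin n) (Fin c) ℝ}
    {Y : Matrix (Fin n) (Fin q) ℝ} (hY : Uᵀ * Y = 0) (k : Fin c) (l : Fin q) :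
    ∑ i, U i k * Y i l = 0 := by
  have := congrFun (congrFun hY k) l
  simpa [Matrix.mul_apply] using this

/-- Exact second moment of the unbiased sketch `∑ₛ u yᵀ / (m π)` when `Uᵀ Y = 0`. -/
lemma expect_fsq_sgram {n m c q : ℕ} {π : Fin n → ℝ} (h0 : ∀ i, 0 < π i) (h1 : ∑ i, π i = 1)
    (hm : 0 < m) {U : Matrix (Fin n) (Fin c) ℝ} {Y : Matrix (Fin n) (Fin q) ℝ}
    (hY : Uᵀ * Y = 0) :
    ∑ ω : Fin m → Fin n, samplingP π ω * fsq (sgram (fun i => 1 / (m * π i)) ω U Y) =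
      ∑ i, (U i ⬝ᵥ U i) / (m * π i) * ∑ j, Y i j ^ 2 := by
  have hm' : (0 : ℝ) < m := by exact_mod_cast hm
  have e1 : ∀ k l, ∑ ω : Fin m → Fin n, samplingP π ω *
      (sgram (fun i => 1 / (m * π i)) ω U Y k l) ^ 2 =
      ∑ i, (1 / (m * π i)) * (U i k ^ 2 * Y i l ^ 2) := by
    intro k l
    have := expect_sum_sq (m := m) h1 (fun i => 1 / (m * π i) * (U i k * Y i l)) (by
      have e : ∀ i, π i * (1 / (m * π i) * (U i k * Y i l)) = 1 / m * (U i k * Y i l) := by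
        intro i; have := h0 i; field_simp
      simp_rw [e]
      rw [← Finset.mul_sum, sum_transpose_mul_eq_zero hY, mul_zero])
    simp only [sgram, Matrix.of_apply]
    rw [this, Finset.mul_sum]
    refine Finset.sum_congr rfl fun i _ => ?_
    have := h0 i
    field_simp
  unfold fsq
  simp_rw [Finset.mul_sum]
  rw [Finset.sum_comm]
  simp_rw [Finset.sum_comm (s := univ (α := Fin m → Fin n)), e1]
  simp_rw [Finset.sum_comm (t := univ (α := Fin n))]
  refine Finset.sum_congr rfl fun i _ => ?_
  simp only [dotProduct, Finset.sum_div, Finset.sum_mul]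
  rw [Finset.sum_comm]
  refine Finset.sum_congr rfl fun k _ => Finset.sum_congr rfl fun l _ => ?_
  ring

/-- After the debiasing reweighting, the coincidence terms of `H̃ G` cancel against `G̃ - G`
exactly, and what is left is `G - (1 - 1 / m) K G` and an off-diagonal double sum, where `K` (the
variable `Kap`) is arbitrary.  For `K = E H̃` the first part is a small multiple of `G` and the
double sum is a degenerate U-statistic. -/
lemma debias_identity {n m c q : ℕ} {π : Fin n → ℝ} (h0 : ∀ i, 0 < π i) (hm : 0 < m)
    {U : Matrix (Fin n) (Fin c) ℝ} (Y : Matrix (Fin n) (Fin q) ℝ)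
    (hlev : ∀ i, U i ⬝ᵥ U i < m * π i) (Kap : Matrix (Fin c) (Fin c) ℝ) (ω : Fin m → Fin n) :
    sgram (fun i => 1 / (m * π i - U i ⬝ᵥ U i)) ω U Y -
      sgram (fun i => 1 / (m * π i - U i ⬝ᵥ U i)) ω U U * sgram (fun i => 1 / (m * π i)) ω U Y =
    (sgram (fun i => 1 / (m * π i)) ω U Y -
      (1 - 1 / (m : ℝ)) • (Kap * sgram (fun i => 1 / (m * π i)) ω U Y)) -
    Matrix.of fun k l => ∑ r, ∑ s, if r = s then 0 else
      (1 / (m * π (ω r) - U (ω r) ⬝ᵥ U (ω r)) * (U (ω r) k * (U (ω r) ⬝ᵥ U (ω s))) -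
        1 / m * (Kap k ⬝ᵥ U (ω s))) * (1 / (m * π (ω s)) * Y (ω s) l) := by
  have hm' : (0 : ℝ) < m := by exact_mod_cast hm
  ext k l
  simp only [Matrix.sub_apply, Matrix.smul_apply, Matrix.of_apply, smul_eq_mul]
  rw [sum_offdiag]
  have e1 : (sgram (fun i => 1 / (m * π i - U i ⬝ᵥ U i)) ω U U *
      sgram (fun i => 1 / (m * π i)) ω U Y) k l = ∑ r, ∑ s,
      1 / (m * π (ω r) - U (ω r) ⬝ᵥ U (ω r)) * (U (ω r) k * (U (ω r) ⬝ᵥ U (ω s))) *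
        (1 / (m * π (ω s)) * Y (ω s) l) := by
    simp only [Matrix.mul_apply, sgram, Matrix.of_apply, dotProduct]
    simp_rw [Finset.sum_mul_sum]
    rw [Finset.sum_comm]
    refine Finset.sum_congr rfl fun r _ => ?_
    rw [Finset.sum_comm]
    refine Finset.sum_congr rfl fun s _ => ?_
    rw [Finset.mul_sum, Finset.mul_sum, Finset.sum_mul]
    exact Finset.sum_congr rfl fun k' _ => by ring
  have e2 : (Kap * sgram (fun i => 1 / (m * π i)) ω U Y) k l =
      ∑ s, (Kap k ⬝ᵥ U (ω s)) * (1 / (m * π (ω s)) * Y (ω s) l) := by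
    simp only [Matrix.mul_apply, sgram, Matrix.of_apply, dotProduct, Finset.mul_sum,
      Finset.sum_mul]
    rw [Finset.sum_comm]
    exact Finset.sum_congr rfl fun s _ => Finset.sum_congr rfl fun k' _ => by ring
  rw [e1, e2]
  simp_rw [sub_mul, Finset.sum_sub_distrib]
  have e3 : (∑ _r : Fin m, ∑ s, 1 / (m : ℝ) * (Kap k ⬝ᵥ U (ω s)) *
      (1 / (m * π (ω s)) * Y (ω s) l)) =
      ∑ s, (Kap k ⬝ᵥ U (ω s)) * (1 / (m * π (ω s)) * Y (ω s) l) := by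
    rw [Finset.sum_const, Finset.card_univ, Fintype.card_fin, nsmul_eq_mul, Finset.mul_sum]
    refine Finset.sum_congr rfl fun s _ => ?_
    rw [mul_assoc, ← mul_assoc, mul_one_div_cancel hm'.ne', one_mul]
  have e4 : (∑ s, 1 / (m : ℝ) * (Kap k ⬝ᵥ U (ω s)) * (1 / (m * π (ω s)) * Y (ω s) l)) =
      1 / m * ∑ s, (Kap k ⬝ᵥ U (ω s)) * (1 / (m * π (ω s)) * Y (ω s) l) := by
    rw [Finset.mul_sum]; exact Finset.sum_congr rfl fun s _ => by ring
  have e5 : sgram (fun i => 1 / (m * π i - U i ⬝ᵥ U i)) ω U Y k l =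
      sgram (fun i => 1 / (m * π i)) ω U Y k l +
      ∑ s, 1 / (m * π (ω s) - U (ω s) ⬝ᵥ U (ω s)) * (U (ω s) k * (U (ω s) ⬝ᵥ U (ω s))) *
        (1 / (m * π (ω s)) * Y (ω s) l) := by
    simp only [sgram, Matrix.of_apply]
    rw [← Finset.sum_add_distrib]
    refine Finset.sum_congr rfl fun s _ => ?_
    have := h0 (ω s)
    have h2 : m * π (ω s) - U (ω s) ⬝ᵥ U (ω s) ≠ 0 := (sub_pos.2 (hlev (ω s))).ne'
    field_simp
    ring
  rw [e3, e4, e5]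
  ring

/-- With `Kap` the mean of `H̃`, bounds the second moment of the degenerate U-statistic left over by `debias_identity`. -/
lemma expect_fsq_ustat {n m c q : ℕ} {π : Fin n → ℝ} (h0 : ∀ i, 0 < π i) (h1 : ∑ i, π i = 1)
    (hm : 0 < m) {U : Matrix (Fin n) (Fin c) ℝ} (hU : Uᵀ * U = 1)
    {Y : Matrix (Fin n) (Fin q) ℝ} (hY : Uᵀ * Y = 0) {t : ℝ} (ht0 : 0 ≤ t) (ht2 : t ≤ 1 / 2)
    (ht : ∀ i, U i ⬝ᵥ U i ≤ t * (m * π i)) (Kap : Matrix (Fin c) (Fin c) ℝ)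
    (hKap : Kap = Uᵀ * diagonal (fun i => m * π i / (m * π i - U i ⬝ᵥ U i)) * U) :
    ∑ ω : Fin m → Fin n, samplingP π ω * fsq (Matrix.of fun k l => ∑ r, ∑ s, if r = s then 0 else
      (1 / (m * π (ω r) - U (ω r) ⬝ᵥ U (ω r)) * (U (ω r) k * (U (ω r) ⬝ᵥ U (ω s))) -
        1 / m * (Kap k ⬝ᵥ U (ω s))) * (1 / (m * π (ω s)) * Y (ω s) l) :
        Matrix (Fin c) (Fin q) ℝ) ≤
      8 * t * ∑ i, (U i ⬝ᵥ U i) / (m * π i) * ∑ j, Y i j ^ 2 := by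
  have hm' : (0 : ℝ) < m := by exact_mod_cast hm
  set at' : Fin n → ℝ := fun i => 1 / (m * π i - U i ⬝ᵥ U i) with hat
  have hmp : ∀ i, 0 < m * π i := fun i => mul_pos hm' (h0 i)
  have hmean : ∀ j k, ∑ i, π i * (at' i * (U i k * (U i ⬝ᵥ U j))) = 1 / m * (Kap k ⬝ᵥ U j) := by
    intro j k
    have e : Kap k ⬝ᵥ U j = ∑ i, m * (π i * (at' i * (U i k * (U i ⬝ᵥ U j)))) := by
      have hentry : ∀ k', Kap k k' =
          ∑ i, U i k * (m * π i / (m * π i - U i ⬝ᵥ U i)) * U i k' := by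
        intro k'
        rw [hKap, Matrix.mul_apply]
        simp only [Matrix.mul_diagonal, Matrix.transpose_apply]
      simp only [dotProduct] at hentry
      simp only [dotProduct, hentry, hat, Finset.sum_mul, Finset.mul_sum]
      rw [Finset.sum_comm]
      exact Finset.sum_congr rfl fun s _ => Finset.sum_congr rfl fun k' _ => by ring
    rw [e, ← Finset.mul_sum, ← mul_assoc]
    rw [one_div_mul_cancel hm'.ne', one_mul]
  have hkl : ∀ k l, ∑ ω : Fin m → Fin n, samplingP π ω * (∑ r, ∑ s, if r = s then 0 else
      (at' (ω r) * (U (ω r) k * (U (ω r) ⬝ᵥ U (ω s))) -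
        1 / m * (Kap k ⬝ᵥ U (ω s))) * (1 / (m * π (ω s)) * Y (ω s) l)) ^ 2 ≤
      2 * (m : ℝ) ^ 2 * ∑ j, π j * (1 / (m * π j)) ^ 2 * Y j l ^ 2 *
        ∑ i, π i * (at' i * (U i k * (U i ⬝ᵥ U j))) ^ 2 := by
    intro k l
    refine (expect_ustat_sq h0 h1 (fun i j => (at' i * (U i k * (U i ⬝ᵥ U j)) -
        1 / m * (Kap k ⬝ᵥ U j)) * (1 / (m * π j) * Y j l)) ?_ ?_).trans ?_
    · intro j
      have : ∀ i, π i * ((at' i * (U i k * (U i ⬝ᵥ U j)) -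
        1 / m * (Kap k ⬝ᵥ U j)) * (1 / (m * π j) * Y j l)) =
        (π i * (at' i * (U i k * (U i ⬝ᵥ U j)))) * (1 / (m * π j) * Y j l) -
        π i * (1 / m * (Kap k ⬝ᵥ U j) * (1 / (m * π j) * Y j l)) := fun i => by ring
      simp_rw [this]
      rw [Finset.sum_sub_distrib, ← Finset.sum_mul, ← Finset.sum_mul, hmean, h1]
      ring
    · intro i
      have hz : ∀ v : Fin c → ℝ, ∑ j, (v ⬝ᵥ U j) * Y j l = 0 := by
        intro v
        simp only [dotProduct, Finset.sum_mul]
        rw [Finset.sum_comm]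
        refine Finset.sum_eq_zero fun k' _ => ?_
        simp_rw [mul_assoc]
        rw [← Finset.mul_sum, sum_transpose_mul_eq_zero hY, mul_zero]
      have : ∀ j, π j * ((at' i * (U i k * (U i ⬝ᵥ U j)) -
        1 / m * (Kap k ⬝ᵥ U j)) * (1 / (m * π j) * Y j l)) =
        at' i * U i k / m * ((U i ⬝ᵥ U j) * Y j l) - 1 / m ^ 2 * ((Kap k ⬝ᵥ U j) * Y j l) := by
        intro j
        have := h0 j
        field_simp
      simp_rw [this]
      rw [Finset.sum_sub_distrib, ← Finset.mul_sum, ← Finset.mul_sum, hz, hz]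
      ring
    · refine mul_le_mul_of_nonneg_left ?_ (by positivity)
      simp_rw [Finset.mul_sum]
      rw [Finset.sum_comm]
      refine Finset.sum_le_sum fun j _ => ?_
      rw [← Finset.mul_sum]
      have h3 := sum_variance_le h1 (fun i => at' i * (U i k * (U i ⬝ᵥ U j))) (hmean j k)
      have h4 : 0 ≤ π j * (1 / (m * π j)) ^ 2 * Y j l ^ 2 := by have := h0 j; positivity
      have h5 := mul_le_mul_of_nonneg_left h3 h4
      refine le_trans (le_of_eq ?_) h5
      rw [Finset.mul_sum]
      exact Finset.sum_congr rfl fun i _ => by ring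
  have hat2 : ∀ i, π i * at' i ^ 2 * (U i ⬝ᵥ U i) ≤ 4 * t / m := by
    intro i
    have hp := h0 i
    have h2 : m * π i / 2 ≤ m * π i - U i ⬝ᵥ U i := by nlinarith [ht i, hmp i]
    have h3 : at' i ≤ 2 / (m * π i) := by
      simp only [hat]
      rw [div_le_div_iff₀ (by linarith [hmp i]) (hmp i)]; linarith
    have h4 : 0 ≤ at' i := by
      simp only [hat]; exact div_nonneg zero_le_one (by linarith [hmp i])
    have h5 : 0 ≤ U i ⬝ᵥ U i := by
      simp only [dotProduct]; exact Finset.sum_nonneg fun _ _ => mul_self_nonneg _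
    calc _ ≤ π i * (2 / (m * π i)) ^ 2 * (t * (m * π i)) := by
          gcongr
          exact ht i
      _ = 4 * t / m := by field_simp; ring
  have hUU : ∀ j, ∑ i, (U i ⬝ᵥ U j) ^ 2 = U j ⬝ᵥ U j := by
    intro j
    have : (U *ᵥ U j) ⬝ᵥ (U *ᵥ U j) = U j ⬝ᵥ U j := by
      rw [Matrix.dotProduct_mulVec, ← Matrix.mulVec_transpose, Matrix.mulVec_mulVec, hU,
        Matrix.one_mulVec]
    rw [← this]
    simp only [sq, dotProduct, Matrix.mulVec]
  unfold fsq
  simp_rw [Finset.mul_sum (s := univ (α := Fin c)), Finset.mul_sum (s := univ (α := Fin q))]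
  rw [Finset.sum_comm]
  simp_rw [Finset.sum_comm (s := univ (α := Fin m → Fin n))]
  refine (Finset.sum_le_sum fun k _ => Finset.sum_le_sum fun l _ => hkl k l).trans ?_
  have hre : (∑ k, ∑ l, 2 * (m : ℝ) ^ 2 * ∑ j, π j * (1 / (m * π j)) ^ 2 * Y j l ^ 2 *
        ∑ i, π i * (at' i * (U i k * (U i ⬝ᵥ U j))) ^ 2) =
      ∑ j, 2 * (m : ℝ) ^ 2 * (π j * (1 / (m * π j)) ^ 2 * ((∑ l, Y j l ^ 2) *
        ∑ i, (π i * at' i ^ 2 * (U i ⬝ᵥ U i)) * (U i ⬝ᵥ U j) ^ 2)) := by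
    have e : ∀ j, ∑ i, (π i * at' i ^ 2 * (U i ⬝ᵥ U i)) * (U i ⬝ᵥ U j) ^ 2 =
        ∑ k, ∑ i, π i * (at' i * (U i k * (U i ⬝ᵥ U j))) ^ 2 := by
      intro j
      rw [Finset.sum_comm]
      refine Finset.sum_congr rfl fun i _ => ?_
      have : U i ⬝ᵥ U i = ∑ k, U i k ^ 2 := by simp [dotProduct, sq]
      rw [this, Finset.mul_sum, Finset.sum_mul]
      exact Finset.sum_congr rfl fun k _ => by ring
    have e' : ∀ j, 2 * (m : ℝ) ^ 2 * (π j * (1 / (m * π j)) ^ 2 * ((∑ l, Y j l ^ 2) *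
        ∑ i, (π i * at' i ^ 2 * (U i ⬝ᵥ U i)) * (U i ⬝ᵥ U j) ^ 2)) =
        ∑ k, ∑ l, 2 * (m : ℝ) ^ 2 * (π j * (1 / (m * π j)) ^ 2 * Y j l ^ 2 *
          ∑ i, π i * (at' i * (U i k * (U i ⬝ᵥ U j))) ^ 2) := by
      intro j
      rw [e, mul_comm (∑ l, Y j l ^ 2), Finset.sum_mul_sum]
      simp_rw [Finset.mul_sum (s := univ (α := Fin c)), Finset.mul_sum (s := univ (α := Fin q))]
      refine Finset.sum_congr rfl fun k _ => Finset.sum_congr rfl fun l _ => ?_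
      ring
    simp_rw [e']
    rw [Finset.sum_comm (s := univ (α := Fin n))]
    refine Finset.sum_congr rfl fun k _ => ?_
    rw [Finset.sum_comm (s := univ (α := Fin n))]
    refine Finset.sum_congr rfl fun l _ => ?_
    rw [Finset.mul_sum]
  rw [hre, Finset.mul_sum]
  refine Finset.sum_le_sum fun j _ => ?_
  have h6 : ∑ i, (π i * at' i ^ 2 * (U i ⬝ᵥ U i)) * (U i ⬝ᵥ U j) ^ 2 ≤
      4 * t / m * (U j ⬝ᵥ U j) := by
    rw [← hUU j, Finset.mul_sum]
    exact Finset.sum_le_sum fun i _ => mul_le_mul_of_nonneg_right (hat2 i) (sq_nonneg _)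
  have hp := h0 j
  calc _ ≤ 2 * (m : ℝ) ^ 2 * (π j * (1 / (m * π j)) ^ 2 * ((∑ l, Y j l ^ 2) *
        (4 * t / m * (U j ⬝ᵥ U j)))) := by
        gcongr
    _ = _ := by rw [← Finset.mul_sum]; field_simp; ring

/-! ### The one-sided estimate -/

lemma dotProduct_self_nonneg_real {c : ℕ} (u : Fin c → ℝ) : 0 ≤ u ⬝ᵥ u := by
  simp only [dotProduct]; exact Finset.sum_nonneg fun _ _ => mul_self_nonneg _

lemma sum_dotProduct_row {n c : ℕ} {U : Matrix (Fin n) (Fin c) ℝ} (hU : Uᵀ * U = 1) :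
    ∑ i, U i ⬝ᵥ U i = c := by
  have h := trace_transpose_mul_self_eq_fsq U
  rw [hU, Matrix.trace_one, Fintype.card_fin] at h
  rw [h, fsq]
  simp [dotProduct, sq]

/-- The debiased residual `G̃ - H̃ G` is smaller than `G` by a factor of order `√t`. -/
lemma expect_fsq_residual {n m c q : ℕ} {π : Fin n → ℝ} (h0 : ∀ i, 0 < π i)
    (h1 : ∑ i, π i = 1) (hm : 0 < m) (hc : 0 < c) {U : Matrix (Fin n) (Fin c) ℝ}
    (hU : Uᵀ * U = 1) {Y : Matrix (Fin n) (Fin q) ℝ} (hY : Uᵀ * Y = 0) {t : ℝ} (ht0 : 0 ≤ t)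
    (ht2 : t ≤ 1 / 120000) (hlev : ∀ i, U i ⬝ᵥ U i < m * π i)
    (ht : ∀ i, U i ⬝ᵥ U i ≤ t * (m * π i)) :
    ∑ ω : Fin m → Fin n, samplingP π ω *
      fsq (sgram (fun i => 1 / (m * π i - U i ⬝ᵥ U i)) ω U Y -
        sgram (fun i => 1 / (m * π i - U i ⬝ᵥ U i)) ω U U *
          sgram (fun i => 1 / (m * π i)) ω U Y) ≤
      25 * t * ∑ i, (U i ⬝ᵥ U i) / (m * π i) * ∑ j, Y i j ^ 2 := by
  have hm' : (0 : ℝ) < m := by exact_mod_cast hm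
  have hmp : ∀ i, 0 < m * π i := fun i => mul_pos hm' (h0 i)
  have hmt : 1 / (m : ℝ) ≤ t := by
    have h2 : (1 : ℝ) ≤ c := by exact_mod_cast hc
    have h3 : (c : ℝ) ≤ t * m := by
      rw [← sum_dotProduct_row hU]
      calc _ ≤ ∑ i, t * (m * π i) := Finset.sum_le_sum fun i _ => ht i
        _ = t * m := by rw [← Finset.mul_sum, ← Finset.mul_sum, h1, mul_one]
    rw [div_le_iff₀ hm']; linarith
  set Kap : Matrix (Fin c) (Fin c) ℝ :=
    Uᵀ * diagonal (fun i => m * π i / (m * π i - U i ⬝ᵥ U i)) * U with hKap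
  set ρ : Fin n → ℝ := fun i => (U i ⬝ᵥ U i) / (m * π i - U i ⬝ᵥ U i) with hρ
  have hKρ : Kap = 1 + Uᵀ * diagonal ρ * U := by
    have : diagonal (fun i => m * π i / (m * π i - U i ⬝ᵥ U i)) = 1 + diagonal ρ := by
      rw [← Matrix.diagonal_one, Matrix.diagonal_add]
      congr 1
      ext i
      have h2 : m * π i - U i ⬝ᵥ U i ≠ 0 := (sub_pos.2 (hlev i)).ne'
      simp only [hρ]
      field_simp
      ring
    rw [hKap, this, Matrix.mul_add, Matrix.add_mul, Matrix.mul_one, hU]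
  have hρ0 : ∀ i, 0 ≤ ρ i := fun i =>
    div_nonneg (dotProduct_self_nonneg_real _) (sub_pos.2 (hlev i)).le
  have hρt : ∀ i, ρ i ≤ 2 * t := by
    intro i
    simp only [hρ]
    rw [div_le_iff₀ (sub_pos.2 (hlev i))]
    nlinarith [ht i, hmp i, mul_nonneg ht0 (hmp i).le]
  have hN := expect_fsq_ustat h0 h1 hm hU hY ht0 (by linarith) ht Kap hKap
  have hG := expect_fsq_sgram h0 h1 hm hY
  set D2 := ∑ i, (U i ⬝ᵥ U i) / (m * π i) * ∑ j, Y i j ^ 2 with hD2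
  have hD0 : 0 ≤ D2 := Finset.sum_nonneg fun i _ => mul_nonneg
    (div_nonneg (dotProduct_self_nonneg_real _) (hmp i).le) (Finset.sum_nonneg fun _ _ => sq_nonneg _)
  have hRG : ∀ G : Matrix (Fin c) (Fin q) ℝ,
      fsq (G - (1 - 1 / (m : ℝ)) • (Kap * G)) ≤ 10 * t ^ 2 * fsq G := by
    intro G
    have e : G - (1 - 1 / (m : ℝ)) • (Kap * G) =
        (1 / (m : ℝ)) • G - (1 - 1 / (m : ℝ)) • (Uᵀ * (diagonal ρ * (U * G))) := by
      rw [hKρ, Matrix.add_mul, Matrix.one_mul, Matrix.mul_assoc, Matrix.mul_assoc]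
      module
    rw [e]
    refine (fsq_sub_le _ _).trans ?_
    rw [fsq_smul, fsq_smul]
    have h2 : fsq (Uᵀ * (diagonal ρ * (U * G))) ≤ (2 * t) ^ 2 * fsq G := by
      refine (fsq_transpose_mul_le hU _).trans ((fsq_diagonal_mul_le hρ0 hρt _).trans ?_)
      rw [fsq_orthonormal_mul hU]
    have h3 : (1 - 1 / (m : ℝ)) ^ 2 ≤ 1 := by
      have : 0 ≤ 1 / (m : ℝ) := by positivity
      rw [sq_le_one_iff_abs_le_one, abs_le]; constructor <;> linarith
    have h4 : (1 / (m : ℝ)) ^ 2 ≤ t ^ 2 := pow_le_pow_left₀ (by positivity) hmt 2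
    have h5 := fsq_nonneg G
    have h6 : (1 - 1 / (m : ℝ)) ^ 2 * fsq (Uᵀ * (diagonal ρ * (U * G))) ≤
        1 * ((2 * t) ^ 2 * fsq G) := mul_le_mul h3 h2 (fsq_nonneg _) zero_le_one
    have h7 := mul_le_mul_of_nonneg_right h4 h5
    nlinarith
  calc _ ≤ ∑ ω : Fin m → Fin n, (20 * t ^ 2 * (samplingP π ω *
          fsq (sgram (fun i => 1 / (m * π i)) ω U Y)) + 2 * (samplingP π ω *
          fsq (Matrix.of fun k l => ∑ r, ∑ s, if r = s then 0 else
      (1 / (m * π (ω r) - U (ω r) ⬝ᵥ U (ω r)) * (U (ω r) k * (U (ω r) ⬝ᵥ U (ω s))) -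
        1 / m * (Kap k ⬝ᵥ U (ω s))) * (1 / (m * π (ω s)) * Y (ω s) l) :
        Matrix (Fin c) (Fin q) ℝ))) := by
        refine Finset.sum_le_sum fun ω _ => ?_
        rw [debias_identity h0 hm Y hlev Kap ω]
        have h2 := (fsq_sub_le (sgram (fun i => 1 / (m * π i)) ω U Y -
          (1 - 1 / (m : ℝ)) • (Kap * sgram (fun i => 1 / (m * π i)) ω U Y))
          (Matrix.of fun k l => ∑ r, ∑ s, if r = s then 0 else
      (1 / (m * π (ω r) - U (ω r) ⬝ᵥ U (ω r)) * (U (ω r) k * (U (ω r) ⬝ᵥ U (ω s))) -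
        1 / m * (Kap k ⬝ᵥ U (ω s))) * (1 / (m * π (ω s)) * Y (ω s) l)))
        have h3 := hRG (sgram (fun i => 1 / (m * π i)) ω U Y)
        have h4 := mul_le_mul_of_nonneg_left
          (h2.trans (add_le_add (mul_le_mul_of_nonneg_left h3 zero_le_two) le_rfl))
          (samplingP_nonneg h0 ω)
        refine h4.trans (le_of_eq ?_)
        ring
    _ ≤ 20 * t ^ 2 * D2 + 2 * (8 * t * D2) := by
        rw [Finset.sum_add_distrib, ← Finset.mul_sum, ← Finset.mul_sum, hG]
        gcongr
    _ ≤ 25 * t * D2 := by nlinarith [mul_nonneg ht0 hD0]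

/-- One-sided estimate: on an event of probability at least `1 - δ / 2` the debiased sketched
least-squares operator `H̃⁻¹ G̃` exists and has root-mean-square size at most the leverage-weighted
norm of the residual `Y` plus a term of order `t ‖Y‖`. -/
lemma one_sided {n m c : ℕ} {π : Fin n → ℝ} (h0 : ∀ i, 0 < π i) (h1 : ∑ i, π i = 1)
    (hm : 0 < m) {U : Matrix (Fin n) (Fin c) ℝ} (hU : Uᵀ * U = 1) {t : ℝ} (ht0 : 0 ≤ t)
    (hlev : ∀ i, U i ⬝ᵥ U i < m * π i) (ht : ∀ i, U i ⬝ᵥ U i ≤ t * (m * π i))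
    {δ : ℝ} (hδ0 : 0 < δ) (hδ1 : δ ≤ 1 / 27) (ht2 : c = 0 → t ≤ 1 / 120000)
    (hC : 0 < c → 120000 * t * Real.log (c / δ) ≤ 1) :
    t ≤ 1 / 120000 ∧ ∃ ζ : Finset (Fin m → Fin n), 1 - δ / 2 ≤ ∑ ω ∈ ζ, samplingP π ω ∧
      (∀ ω ∈ ζ, IsUnit (sgram (fun i => 1 / (m * π i - U i ⬝ᵥ U i)) ω U U).det) ∧
      ∀ (q : ℕ) (Y : Matrix (Fin n) (Fin q) ℝ), Uᵀ * Y = 0 →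
        ∑ ω ∈ ζ, samplingP π ω * fsq ((sgram (fun i => 1 / (m * π i - U i ⬝ᵥ U i)) ω U U)⁻¹ *
            sgram (fun i => 1 / (m * π i - U i ⬝ᵥ U i)) ω U Y) ≤
          (∑ ω ∈ ζ, samplingP π ω) *
            (√(∑ i, (U i ⬝ᵥ U i) / (m * π i) * ∑ j, Y i j ^ 2) + 16 * t * √(fsq Y)) ^ 2 := by
  rcases Nat.eq_zero_or_pos c with rfl | hc
  · refine ⟨ht2 rfl, univ, ?_, ?_, ?_⟩
    · rw [sum_samplingP h1]; linarith
    · intro ω _; simp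
    · intro q Y _
      simp only [fsq, Finset.univ_eq_empty, Finset.sum_empty, mul_zero, Finset.sum_const_zero]
      rw [sum_samplingP h1]; positivity
  have hm' : (0 : ℝ) < m := by exact_mod_cast hm
  have hmp : ∀ i, 0 < m * π i := fun i => mul_pos hm' (h0 i)
  obtain ⟨hts, ζ, hζ, hev⟩ := exists_event h0 h1 hU hm ht0 ht hc hδ0 hδ1 (hC hc)
  have hinv : ∀ ω ∈ ζ, _ := fun ω hω => inverse_of_half_le
    (H := sgram (fun i => 1 / (m * π i - U i ⬝ᵥ U i)) ω U U) (fun v => by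
      refine (hev ω hω v).trans ?_
      rw [dotProduct_sgram, dotProduct_sgram]
      refine Finset.sum_le_sum fun s _ => mul_le_mul_of_nonneg_right ?_ (sq_nonneg _)
      exact one_div_le_one_div_of_le (sub_pos.2 (hlev _))
        (sub_le_self _ (dotProduct_self_nonneg_real _)))
  refine ⟨hts, ζ, by nlinarith, fun ω hω => (hinv ω hω).1, fun q Y hY => ?_⟩
  have hG := expect_fsq_sgram h0 h1 hm hY
  have hJ := expect_fsq_residual h0 h1 hm hc hU hY ht0 hts hlev ht
  set D2 := ∑ i, (U i ⬝ᵥ U i) / (m * π i) * ∑ j, Y i j ^ 2 with hD2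
  have hD0 : 0 ≤ D2 := Finset.sum_nonneg fun i _ => mul_nonneg
    (div_nonneg (dotProduct_self_nonneg_real _) (hmp i).le) (Finset.sum_nonneg fun _ _ => sq_nonneg _)
  have hDY : D2 ≤ t * fsq Y := by
    rw [hD2, fsq, Finset.mul_sum]
    refine Finset.sum_le_sum fun i _ => mul_le_mul_of_nonneg_right ?_
      (Finset.sum_nonneg fun _ _ => sq_nonneg _)
    rw [div_le_iff₀ (hmp i)]; exact ht i
  have hY0 := fsq_nonneg Y
  have hmink := minkowski_fsq ζ (samplingP π)
    (fun ω => sgram (fun i => 1 / (m * π i)) ω U Y)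
    (fun ω => (sgram (fun i => 1 / (m * π i - U i ⬝ᵥ U i)) ω U U)⁻¹ *
      (sgram (fun i => 1 / (m * π i - U i ⬝ᵥ U i)) ω U Y -
        sgram (fun i => 1 / (m * π i - U i ⬝ᵥ U i)) ω U U *
          sgram (fun i => 1 / (m * π i)) ω U Y))
    (fun ω _ => samplingP_nonneg h0 ω) (a := √D2) (b := 10 * t * √(fsq Y))
    (Real.sqrt_nonneg _) (by positivity)
    (by
      rw [Real.sq_sqrt hD0, ← hG]
      exact Finset.sum_le_sum_of_subset_of_nonneg (Finset.subset_univ _)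
        fun ω _ _ => mul_nonneg (samplingP_nonneg h0 ω) (fsq_nonneg _))
    (by
      rw [mul_pow, Real.sq_sqrt hY0]
      have h2 := hJ.trans (mul_le_mul_of_nonneg_left hDY (by positivity))
      calc _ ≤ ∑ ω ∈ ζ, 4 * (samplingP π ω *
            fsq (sgram (fun i => 1 / (m * π i - U i ⬝ᵥ U i)) ω U Y -
        sgram (fun i => 1 / (m * π i - U i ⬝ᵥ U i)) ω U U *
          sgram (fun i => 1 / (m * π i)) ω U Y)) := by
            refine Finset.sum_le_sum fun ω hω => ?_
            refine (mul_le_mul_of_nonneg_left ((hinv ω hω).2 q _)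
              (samplingP_nonneg h0 ω)).trans (le_of_eq (by ring))
        _ ≤ 4 * ∑ ω : Fin m → Fin n, samplingP π ω *
            fsq (sgram (fun i => 1 / (m * π i - U i ⬝ᵥ U i)) ω U Y -
        sgram (fun i => 1 / (m * π i - U i ⬝ᵥ U i)) ω U U *
          sgram (fun i => 1 / (m * π i)) ω U Y) := by
            rw [← Finset.mul_sum]
            refine mul_le_mul_of_nonneg_left ?_ (by norm_num)
            exact Finset.sum_le_sum_of_subset_of_nonneg (Finset.subset_univ _)
              fun ω _ _ => mul_nonneg (samplingP_nonneg h0 ω) (fsq_nonneg _)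
        _ ≤ 4 * (25 * t * (t * fsq Y)) := by gcongr
        _ = _ := by ring)
  have hsplit : ∑ ω ∈ ζ, samplingP π ω *
      fsq ((sgram (fun i => 1 / (m * π i - U i ⬝ᵥ U i)) ω U U)⁻¹ *
            sgram (fun i => 1 / (m * π i - U i ⬝ᵥ U i)) ω U Y) ≤
      (√D2 + 10 * t * √(fsq Y)) ^ 2 := by
    refine le_trans (le_of_eq ?_) hmink
    refine Finset.sum_congr rfl fun ω hω => ?_
    congr 2
    rw [Matrix.mul_sub, ← Matrix.mul_assoc, Matrix.nonsing_inv_mul _ (hinv ω hω).1,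
      Matrix.one_mul]
    abel
  refine hsplit.trans ?_
  have hD3 : √D2 ≤ √(fsq Y) := Real.sqrt_le_sqrt (by nlinarith)
  have hx := Real.sqrt_nonneg D2
  have hy := Real.sqrt_nonneg (fsq Y)
  set x := √D2
  set y := √(fsq Y)
  set P := ∑ ω ∈ ζ, samplingP π ω
  -- `ζ` has probability at least `1 - t δ`, so conditioning costs only a factor `1 + O(t)`, which the
  -- second-order term absorbs.
  have hP : 1 ≤ P * (1 + t) ^ 2 := by
    have : 1 - t / 27 ≤ P := by nlinarith
    nlinarith [mul_nonneg ht0 ht0]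
  have hP0 : 0 ≤ P := by nlinarith
  have hlin : (1 + t) * (x + 10 * t * y) ≤ x + 16 * t * y := by
    have e1 : t * x ≤ t * y := mul_le_mul_of_nonneg_left hD3 ht0
    have e2 : t * (t * y) ≤ 1 / 120000 * (t * y) :=
      mul_le_mul_of_nonneg_right hts (by positivity)
    nlinarith [mul_nonneg ht0 hy]
  calc (x + 10 * t * y) ^ 2 ≤ P * (1 + t) ^ 2 * (x + 10 * t * y) ^ 2 :=
        le_mul_of_one_le_left (sq_nonneg _) hP
    _ = P * ((1 + t) * (x + 10 * t * y)) ^ 2 := by ring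
    _ ≤ P * (x + 16 * t * y) ^ 2 := by
        refine mul_le_mul_of_nonneg_left ?_ hP0
        exact pow_le_pow_left₀ (by positivity) hlin 2

/-! ### Reduction to orthonormal factors -/

lemma exists_orthonormal_factor {n c : ℕ} {A : Matrix (Fin n) (Fin c) ℝ}
    (hA : IsUnit (Aᵀ * A).det) :
    ∃ (U : Matrix (Fin n) (Fin c) ℝ) (B : Matrix (Fin c) (Fin c) ℝ),
      IsUnit B.det ∧ Uᵀ * U = 1 ∧ A = U * B := by
  obtain ⟨O, l, hO, hO', hp⟩ := exists_diag (A := Aᵀ * A) (by simp)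
  have hS : Aᵀ * A = O * diagonal l * Oᵀ := by simpa using hp 1
  have hD : Oᵀ * (Aᵀ * A) * O = diagonal l := by
    rw [hS]
    calc _ = (Oᵀ * O) * diagonal l * (Oᵀ * O) := by simp only [Matrix.mul_assoc]
      _ = _ := by rw [hO]; simp
  have hl0 : ∀ a, 0 ≤ l a := by
    intro a
    have h1 : Oᵀ * (Aᵀ * A) * O = (A * O)ᵀ * (A * O) := by
      rw [Matrix.transpose_mul]; simp only [Matrix.mul_assoc]
    have h2 := congrFun (congrFun (h1.symm.trans hD) a) a
    rw [Matrix.diagonal_apply_eq, Matrix.mul_apply] at h2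
    rw [← h2]
    exact Finset.sum_nonneg fun i _ => mul_self_nonneg _
  have hlu : IsUnit (diagonal l).det := by
    have hOd : IsUnit O.det := by
      rw [← Matrix.isUnit_iff_isUnit_det]
      exact IsUnit.of_mul_eq_one _ hO'
    rw [← hD, Matrix.det_mul, Matrix.det_mul, Matrix.det_transpose]
    exact (hOd.mul hA).mul hOd
  have hl : ∀ a, 0 < l a := by
    intro a
    refine lt_of_le_of_ne (hl0 a) fun h => ?_
    rw [Matrix.det_diagonal, isUnit_iff_ne_zero] at hlu
    exact hlu (Finset.prod_eq_zero (Finset.mem_univ a) h.symm)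
  have hs : ∀ a, √(l a) ≠ 0 := fun a => (Real.sqrt_pos.2 (hl a)).ne'
  refine ⟨A * O * diagonal (fun a => (√(l a))⁻¹), diagonal (fun a => √(l a)) * Oᵀ, ?_, ?_, ?_⟩
  · rw [Matrix.det_mul, Matrix.det_transpose, Matrix.det_diagonal]
    refine IsUnit.mul ?_ ?_
    · rw [isUnit_iff_ne_zero]; exact Finset.prod_ne_zero_iff.2 fun a _ => hs a
    · rw [← Matrix.isUnit_iff_isUnit_det]
      exact IsUnit.of_mul_eq_one _ hO'
  · rw [Matrix.transpose_mul, Matrix.transpose_mul, Matrix.diagonal_transpose]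
    calc _ = diagonal (fun a => (√(l a))⁻¹) * (Oᵀ * (Aᵀ * A) * O) *
          diagonal (fun a => (√(l a))⁻¹) := by simp only [Matrix.mul_assoc]
      _ = 1 := by
        rw [hD, Matrix.diagonal_mul_diagonal, Matrix.diagonal_mul_diagonal, ← Matrix.diagonal_one]
        congr 1; ext a
        have := hs a
        have h2 := Real.mul_self_sqrt (hl0 a)
        field_simp
        rw [sq, h2]
  · have h1 : diagonal (fun a => (√(l a))⁻¹) * diagonal (fun a => √(l a)) =
        (1 : Matrix (Fin c) (Fin c) ℝ) := by
      rw [Matrix.diagonal_mul_diagonal, ← Matrix.diagonal_one]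
      congr 1; ext a
      exact inv_mul_cancel₀ (hs a)
    calc A = A * (O * Oᵀ) := by rw [hO', Matrix.mul_one]
      _ = A * O * (diagonal (fun a => (√(l a))⁻¹) * diagonal (fun a => √(l a))) * Oᵀ := by
        rw [h1]; simp only [Matrix.mul_assoc, Matrix.one_mul]
      _ = _ := by simp only [Matrix.mul_assoc]

/-- The sketched least-squares operator of `U * B` does not depend on the invertible factor `B`. -/
lemma sketch_factor {n c m : ℕ} {U : Matrix (Fin n) (Fin c) ℝ} {B : Matrix (Fin c) (Fin c) ℝ}
    (hB : IsUnit B.det) (S : Matrix (Fin m) (Fin n) ℝ) :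
    (U * B) * (((S * (U * B))ᵀ * (S * (U * B)))⁻¹ * (S * (U * B))ᵀ) =
      U * (((S * U)ᵀ * (S * U))⁻¹ * (S * U)ᵀ) := by
  have hBt : IsUnit Bᵀ.det := by rwa [Matrix.det_transpose]
  rw [← Matrix.mul_assoc S U B, Matrix.transpose_mul (S * U) B]
  have e : Bᵀ * (S * U)ᵀ * (S * U * B) = Bᵀ * ((S * U)ᵀ * (S * U)) * B := by
    simp only [Matrix.mul_assoc]
  rw [e, Matrix.mul_inv_rev, Matrix.mul_inv_rev]
  calc _ = U * ((B * B⁻¹) * (((S * U)ᵀ * (S * U))⁻¹ * ((Bᵀ⁻¹ * Bᵀ) * (S * U)ᵀ))) := by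
        simp only [Matrix.mul_assoc]
    _ = _ := by
        rw [Matrix.mul_nonsing_inv _ hB, Matrix.nonsing_inv_mul _ hBt, Matrix.one_mul,
          Matrix.one_mul]

lemma proj_factor {n c : ℕ} {U : Matrix (Fin n) (Fin c) ℝ} {B : Matrix (Fin c) (Fin c) ℝ}
    (hB : IsUnit B.det) (hU : Uᵀ * U = 1) :
    (U * B) * ((U * B)ᵀ * (U * B))⁻¹ * (U * B)ᵀ = U * Uᵀ := by
  have := sketch_factor (U := U) hB (1 : Matrix (Fin n) (Fin n) ℝ)
  simp only [Matrix.one_mul] at this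
  rw [Matrix.mul_assoc, this, hU, inv_one, Matrix.one_mul]

lemma lev_factor {n c : ℕ} {U : Matrix (Fin n) (Fin c) ℝ} {B : Matrix (Fin c) (Fin c) ℝ}
    (hB : IsUnit B.det) (hU : Uᵀ * U = 1) (i : Fin n) : lev (U * B) i = U i ⬝ᵥ U i := by
  have h := congrFun (congrFun (proj_factor hB hU) i) i
  have e1 : (U * Uᵀ) i i = U i ⬝ᵥ U i := by
    simp [Matrix.mul_apply, dotProduct]
  have e2 : lev (U * B) i = ((U * B) * ((U * B)ᵀ * (U * B))⁻¹ * (U * B)ᵀ) i i := by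
    rw [lev, Matrix.mul_assoc, Matrix.mul_apply]
    simp only [dotProduct, Matrix.mulVec]
    refine Finset.sum_congr rfl fun k _ => ?_
    rw [Matrix.mul_apply]
    rfl
  rw [e2, h, e1]

lemma samplingSdeb_gram {n c k q m : ℕ} {A : Matrix (Fin n) (Fin c) ℝ} {π : Fin n → ℝ}
    (h0 : ∀ i, 0 < π i) (hm : 0 < m) (hlev : ∀ i, lev A i < m * π i) (ω : Fin m → Fin n)
    (U : Matrix (Fin n) (Fin k) ℝ) (Y : Matrix (Fin n) (Fin q) ℝ) :
    (samplingSdeb A π ω * U)ᵀ * (samplingSdeb A π ω * Y) =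
      sgram (fun i => 1 / (m * π i - lev A i)) ω U Y := by
  have hm' : (0 : ℝ) < m := by exact_mod_cast hm
  have hent : ∀ (q : ℕ) (Y : Matrix (Fin n) (Fin q) ℝ) s l, (samplingSdeb A π ω * Y) s l =
      1 / √(1 - lev A (ω s) / (m * π (ω s))) * (1 / √(m * π (ω s))) * Y (ω s) l := by
    intro q Y s l
    rw [samplingSdeb, Matrix.mul_assoc, Matrix.diagonal_mul, Matrix.mul_apply, mul_assoc]
    congr 1
    simp [samplingS, Finset.sum_ite_eq']
  ext a b
  rw [Matrix.mul_apply]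
  simp only [Matrix.transpose_apply, hent, sgram, Matrix.of_apply]
  refine Finset.sum_congr rfl fun s _ => ?_
  have h1 : 0 < m * π (ω s) := mul_pos hm' (h0 _)
  have h2 : 0 < 1 - lev A (ω s) / (m * π (ω s)) := by
    rw [sub_pos, div_lt_one h1]; exact hlev _
  have h3 : (1 / √(1 - lev A (ω s) / (m * π (ω s)))) ^ 2 * (1 / √(m * π (ω s))) ^ 2 =
      1 / (m * π (ω s) - lev A (ω s)) := by
    rw [div_pow, div_pow, Real.sq_sqrt h2.le, Real.sq_sqrt h1.le, one_pow, div_mul_div_comm, one_mul]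
    rw [sub_mul, one_mul, div_mul_cancel₀ _ h1.ne']
  rw [← h3]; ring

/-! ### Two-sided cores -/

lemma fsq_sub_expand {k l : ℕ} (A B : Matrix (Fin k) (Fin l) ℝ) :
    fsq (A - B) = fsq A - 2 * (Aᵀ * B).trace + fsq B := by
  rw [← trace_transpose_mul_self_eq_fsq (A - B), ← trace_transpose_mul_self_eq_fsq A,
    ← trace_transpose_mul_self_eq_fsq B, Matrix.transpose_sub, Matrix.sub_mul, Matrix.mul_sub,
    Matrix.mul_sub, Matrix.trace_sub, Matrix.trace_sub, Matrix.trace_sub]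
  have : (Bᵀ * A).trace = (Aᵀ * B).trace := by
    rw [← Matrix.trace_transpose, Matrix.transpose_mul, Matrix.transpose_transpose]
  rw [this]; ring

lemma fsq_mul_transpose_le {n c q : ℕ} {V : Matrix (Fin n) (Fin c) ℝ} (hV : Vᵀ * V = 1)
    (A : Matrix (Fin q) (Fin n) ℝ) : fsq (A * V) ≤ fsq A := by
  rw [← fsq_transpose (A * V), ← fsq_transpose A, Matrix.transpose_mul]
  exact fsq_transpose_mul_le hV _

/-- Pythagoras for the reconstruction loss: the excess loss of a core `W` over the best core is
the squared distance between the cores, in orthonormal coordinates. -/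
lemma loss_orthonormal {n p c r : ℕ} {U : Matrix (Fin n) (Fin c) ℝ}
    {V : Matrix (Fin p) (Fin r) ℝ} (hU : Uᵀ * U = 1) (hV : Vᵀ * V = 1)
    (X : Matrix (Fin n) (Fin p) ℝ) (W : Matrix (Fin c) (Fin r) ℝ) :
    fsq (U * W * Vᵀ - X) = fsq (W - Uᵀ * X * V) + (fsq X - fsq (Uᵀ * X * V)) := by
  have e1 : fsq (U * W * Vᵀ) = fsq W := by
    rw [Matrix.mul_assoc, fsq_orthonormal_mul hU, ← fsq_transpose, Matrix.transpose_mul,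
      Matrix.transpose_transpose, fsq_orthonormal_mul hV, fsq_transpose]
  have e2 : ((U * W * Vᵀ)ᵀ * X).trace = (Wᵀ * (Uᵀ * X * V)).trace := by
    rw [Matrix.transpose_mul, Matrix.transpose_mul, Matrix.transpose_transpose]
    calc _ = (V * (Wᵀ * Uᵀ * X)).trace := by simp only [Matrix.mul_assoc]
      _ = _ := by rw [Matrix.trace_mul_comm]; simp only [Matrix.mul_assoc]
  rw [fsq_sub_expand, fsq_sub_expand, e1, e2]; ring

/-- Splitting the error of the two-sided sketched core into a left error, a right error and a
product of both. -/
lemma core_split {n p c r : ℕ} {U : Matrix (Fin n) (Fin c) ℝ} {V : Matrix (Fin p) (Fin r) ℝ}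
    {M : Matrix (Fin c) (Fin n) ℝ} {N : Matrix (Fin r) (Fin p) ℝ} (hM : M * U = 1)
    (hN : N * V = 1) (X : Matrix (Fin n) (Fin p) ℝ) :
    M * X * Nᵀ - Uᵀ * X * V = (M * (X - U * (Uᵀ * X)) * V +
      Uᵀ * (N * (Xᵀ - V * (Vᵀ * Xᵀ)))ᵀ) +
      M * ((X - U * (Uᵀ * X)) - (X - U * (Uᵀ * X)) * V * Vᵀ) * Nᵀ := by
  have hN' : Vᵀ * Nᵀ = 1 := by rw [← Matrix.transpose_mul, hN, Matrix.transpose_one]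
  have hM' : ∀ {q : ℕ} (A : Matrix (Fin c) (Fin q) ℝ), M * (U * A) = A := fun A => by
    rw [← Matrix.mul_assoc, hM, Matrix.one_mul]
  simp only [Matrix.transpose_mul, Matrix.transpose_sub, Matrix.transpose_transpose,
    Matrix.mul_sub, Matrix.sub_mul, Matrix.mul_assoc, hM', hN', Matrix.mul_one]
  abel

/-- The mean excess loss of a two-sided sketched core, for independent left and right sketches
which satisfy one-sided estimates. -/
lemma variance_core {Ω₁ Ω₂ : Type*} (s₁ : Finset Ω₁) (s₂ : Finset Ω₂) (w₁ : Ω₁ → ℝ)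
    (w₂ : Ω₂ → ℝ) (hw₁ : ∀ x, 0 ≤ w₁ x) (hw₂ : ∀ x, 0 ≤ w₂ x) (hP₁ : 0 < ∑ x ∈ s₁, w₁ x)
    (hP₂ : 0 < ∑ x ∈ s₂, w₂ x) {n p c r : ℕ} {U : Matrix (Fin n) (Fin c) ℝ}
    {V : Matrix (Fin p) (Fin r) ℝ} (hU : Uᵀ * U = 1) (hV : Vᵀ * V = 1)
    (X : Matrix (Fin n) (Fin p) ℝ) (M : Ω₁ → Matrix (Fin c) (Fin n) ℝ)
    (N : Ω₂ → Matrix (Fin r) (Fin p) ℝ) (hM : ∀ x ∈ s₁, M x * U = 1)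
    (hN : ∀ x ∈ s₂, N x * V = 1) {t₁ t₂ : ℝ} (ht₁ : 0 ≤ t₁) (ht₂ : 0 ≤ t₂)
    (ht₁' : t₁ ≤ 1 / 120000) (ht₂' : t₂ ≤ 1 / 120000) (τ₁ : Fin n → ℝ) (τ₂ : Fin p → ℝ)
    (hτ₁ : ∀ i, τ₁ i ≤ t₁) (hτ₂ : ∀ i, τ₂ i ≤ t₂)
    (h₁ : ∀ (q : ℕ) (Y : Matrix (Fin n) (Fin q) ℝ), Uᵀ * Y = 0 →
      ∑ x ∈ s₁, w₁ x * fsq (M x * Y) ≤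
        (∑ x ∈ s₁, w₁ x) * (√(∑ i, τ₁ i * ∑ j, Y i j ^ 2) + 16 * t₁ * √(fsq Y)) ^ 2)
    (h₂ : ∀ (q : ℕ) (Y : Matrix (Fin p) (Fin q) ℝ), Vᵀ * Y = 0 →
      ∑ x ∈ s₂, w₂ x * fsq (N x * Y) ≤
        (∑ x ∈ s₂, w₂ x) * (√(∑ i, τ₂ i * ∑ j, Y i j ^ 2) + 16 * t₂ * √(fsq Y)) ^ 2) :
    ((∑ x ∈ s₁, w₁ x) * ∑ x ∈ s₂, w₂ x)⁻¹ *
        ∑ x ∈ s₁ ×ˢ s₂, w₁ x.1 * w₂ x.2 * fsq (M x.1 * X * (N x.2)ᵀ - Uᵀ * X * V) ≤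
      (√(∑ i, τ₁ i * ∑ j, (X - U * (Uᵀ * X)) i j ^ 2) +
        √(∑ i, τ₂ i * ∑ j, (Xᵀ - V * (Vᵀ * Xᵀ)) i j ^ 2) +
        18 * (t₁ + t₂) * √(fsq X - fsq (Uᵀ * X * V))) ^ 2 := by
  set P₁ := ∑ x ∈ s₁, w₁ x with hP₁d
  set P₂ := ∑ x ∈ s₂, w₂ x with hP₂d
  set Y := X - U * (Uᵀ * X) with hY
  set Y' := Xᵀ - V * (Vᵀ * Xᵀ) with hY'
  set L := fsq X - fsq (Uᵀ * X * V) with hL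
  have hUY : Uᵀ * Y = 0 := by
    rw [hY, Matrix.mul_sub, ← Matrix.mul_assoc, hU, Matrix.one_mul, sub_self]
  have hVY : Vᵀ * Y' = 0 := by
    rw [hY', Matrix.mul_sub, ← Matrix.mul_assoc, hV, Matrix.one_mul, sub_self]
  set Z := Y - Y * V * Vᵀ with hZ
  clear_value Z L Y' Y P₂ P₁
  have hUZ : Uᵀ * Z = 0 := by
    rw [hZ, Matrix.mul_sub, ← Matrix.mul_assoc, ← Matrix.mul_assoc, hUY]; simp
  have hVZ : Vᵀ * Zᵀ = 0 := by
    rw [← Matrix.transpose_mul, hZ, Matrix.sub_mul, Matrix.mul_assoc (Y * V), hV, Matrix.mul_one,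
      sub_self, Matrix.transpose_zero]
  have hYL : fsq Y ≤ L := by
    have h3 := fsq_pythagoras hU X
    have h4 := fsq_mul_transpose_le hV (Uᵀ * X)
    rw [hL, hY]; linarith
  have hY'L : fsq Y' ≤ L := by
    have h3 := fsq_pythagoras hV Xᵀ
    have h4 := fsq_transpose_mul_le hU (X * V)
    rw [← Matrix.mul_assoc] at h4
    have h5 : fsq (Vᵀ * Xᵀ) = fsq (X * V) := by rw [← Matrix.transpose_mul, fsq_transpose]
    rw [fsq_transpose, h5] at h3
    rw [hL, hY']; linarith
  have hZL : fsq Z ≤ L := by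
    refine le_trans ?_ hYL
    have h3 := fsq_compl_le hV Yᵀ
    have e : Yᵀ - V * (Vᵀ * Yᵀ) = Zᵀ := by
      rw [hZ, Matrix.transpose_sub, Matrix.transpose_mul, Matrix.transpose_mul,
        Matrix.transpose_transpose]
    rwa [e, fsq_transpose, fsq_transpose] at h3
  have hL0 : 0 ≤ L := (fsq_nonneg _).trans hYL
  have hcrude : ∀ {k q : ℕ} (τ : Fin k → ℝ) {t : ℝ}, 0 ≤ t → t ≤ 1 / 120000 → (∀ i, τ i ≤ t) →
      ∀ A : Matrix (Fin k) (Fin q) ℝ,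
      (√(∑ i, τ i * ∑ j, A i j ^ 2) + 16 * t * √(fsq A)) ^ 2 ≤ 4 * t * fsq A := by
    intro k q τ t ht ht' hτ A
    have h3 : √(∑ i, τ i * ∑ j, A i j ^ 2) ≤ √t * √(fsq A) := by
      rw [← Real.sqrt_mul ht]
      refine Real.sqrt_le_sqrt ?_
      rw [fsq, Finset.mul_sum]
      exact Finset.sum_le_sum fun i _ => mul_le_mul_of_nonneg_right (hτ i)
        (Finset.sum_nonneg fun _ _ => sq_nonneg _)
    have h4 : 16 * t ≤ √t := by
      exact Real.le_sqrt_of_sq_le (by nlinarith)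
    have h5 : √(∑ i, τ i * ∑ j, A i j ^ 2) + 16 * t * √(fsq A) ≤ 2 * √t * √(fsq A) := by
      nlinarith [mul_le_mul_of_nonneg_right h4 (Real.sqrt_nonneg (fsq A))]
    calc _ ≤ (2 * √t * √(fsq A)) ^ 2 := pow_le_pow_left₀ (by positivity) h5 2
      _ = 4 * (√t ^ 2) * (√(fsq A) ^ 2) := by ring
      _ = _ := by rw [Real.sq_sqrt ht, Real.sq_sqrt (fsq_nonneg A)]
  set D := √(∑ i, τ₁ i * ∑ j, Y i j ^ 2) with hD
  set D' := √(∑ i, τ₂ i * ∑ j, Y' i j ^ 2) with hD'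
  have hw : ∀ x ∈ s₁ ×ˢ s₂, 0 ≤ (P₁ * P₂)⁻¹ * (w₁ x.1 * w₂ x.2) := fun x _ =>
    mul_nonneg (inv_nonneg.2 (mul_pos hP₁ hP₂).le) (mul_nonneg (hw₁ _) (hw₂ _))
  have hsL := Real.sqrt_nonneg L
  -- Left error.
  have b1 : ∑ x ∈ s₁ ×ˢ s₂, (P₁ * P₂)⁻¹ * (w₁ x.1 * w₂ x.2) * fsq (M x.1 * Y * V) ≤
      (D + 16 * t₁ * √L) ^ 2 := by
    calc _ ≤ ∑ x ∈ s₁ ×ˢ s₂, (P₁ * P₂)⁻¹ * (w₁ x.1 * w₂ x.2) * fsq (M x.1 * Y) :=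
          Finset.sum_le_sum fun x hx => mul_le_mul_of_nonneg_left (fsq_mul_transpose_le hV _)
            (hw x hx)
      _ = P₁⁻¹ * ∑ x ∈ s₁, w₁ x * fsq (M x * Y) := by
        have e : ∀ x ∈ s₁, ∑ y ∈ s₂, (P₁ * P₂)⁻¹ * (w₁ x * w₂ y) * fsq (M x * Y) =
            P₁⁻¹ * (w₁ x * fsq (M x * Y)) := by
          intro x _
          have : ∀ y, (P₁ * P₂)⁻¹ * (w₁ x * w₂ y) * fsq (M x * Y) =
              (P₁ * P₂)⁻¹ * w₁ x * fsq (M x * Y) * w₂ y := fun y => by ring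
          simp_rw [this]
          rw [← Finset.mul_sum, ← hP₂d]
          field_simp
        rw [Finset.sum_product, Finset.sum_congr rfl e, ← Finset.mul_sum]
      _ ≤ P₁⁻¹ * (P₁ * (D + 16 * t₁ * √(fsq Y)) ^ 2) :=
        mul_le_mul_of_nonneg_left (h₁ p Y hUY) (inv_nonneg.2 hP₁.le)
      _ = (D + 16 * t₁ * √(fsq Y)) ^ 2 := by rw [← mul_assoc, inv_mul_cancel₀ hP₁.ne', one_mul]
      _ ≤ _ := by
        have := Real.sqrt_le_sqrt hYL
        gcongr
  -- Right error.
  have b2 : ∑ x ∈ s₁ ×ˢ s₂, (P₁ * P₂)⁻¹ * (w₁ x.1 * w₂ x.2) * fsq (Uᵀ * (N x.2 * Y')ᵀ) ≤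
      (D' + 16 * t₂ * √L) ^ 2 := by
    calc _ ≤ ∑ x ∈ s₁ ×ˢ s₂, (P₁ * P₂)⁻¹ * (w₁ x.1 * w₂ x.2) * fsq (N x.2 * Y') :=
          Finset.sum_le_sum fun x hx => mul_le_mul_of_nonneg_left
            ((fsq_transpose_mul_le hU _).trans (fsq_transpose _).le) (hw x hx)
      _ = P₂⁻¹ * ∑ x ∈ s₂, w₂ x * fsq (N x * Y') := by
        have e : ∀ y ∈ s₂, ∑ x ∈ s₁, (P₁ * P₂)⁻¹ * (w₁ x * w₂ y) * fsq (N y * Y') =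
            P₂⁻¹ * (w₂ y * fsq (N y * Y')) := by
          intro y _
          have : ∀ x, (P₁ * P₂)⁻¹ * (w₁ x * w₂ y) * fsq (N y * Y') =
              (P₁ * P₂)⁻¹ * w₂ y * fsq (N y * Y') * w₁ x := fun y => by ring
          simp_rw [this]
          rw [← Finset.mul_sum, ← hP₁d]
          field_simp
        rw [Finset.sum_product_right, Finset.sum_congr rfl e, ← Finset.mul_sum]
      _ ≤ P₂⁻¹ * (P₂ * (D' + 16 * t₂ * √(fsq Y')) ^ 2) :=
        mul_le_mul_of_nonneg_left (h₂ n Y' hVY) (inv_nonneg.2 hP₂.le)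
      _ = (D' + 16 * t₂ * √(fsq Y')) ^ 2 := by
        rw [← mul_assoc, inv_mul_cancel₀ hP₂.ne', one_mul]
      _ ≤ _ := by
        have := Real.sqrt_le_sqrt hY'L
        gcongr
  -- Product of both errors: apply the left estimate for each fixed right sketch.
  have b3 : ∑ x ∈ s₁ ×ˢ s₂, (P₁ * P₂)⁻¹ * (w₁ x.1 * w₂ x.2) * fsq (M x.1 * Z * (N x.2)ᵀ) ≤
      (2 * (t₁ + t₂) * √L) ^ 2 := by
    have e : ∀ y ∈ s₂, ∑ x ∈ s₁, (P₁ * P₂)⁻¹ * (w₁ x * w₂ y) * fsq (M x * Z * (N y)ᵀ) ≤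
        P₂⁻¹ * (4 * t₁) * (w₂ y * fsq (N y * Zᵀ)) := by
      intro y _
      have h3 := (h₁ r (Z * (N y)ᵀ) (by rw [← Matrix.mul_assoc, hUZ, Matrix.zero_mul])).trans
        (mul_le_mul_of_nonneg_left (hcrude τ₁ ht₁ ht₁' hτ₁ (Z * (N y)ᵀ)) hP₁.le)
      have h4 : fsq (Z * (N y)ᵀ) = fsq (N y * Zᵀ) := by
        rw [← fsq_transpose, Matrix.transpose_mul, Matrix.transpose_transpose]
      have h5 : ∑ x ∈ s₁, (P₁ * P₂)⁻¹ * (w₁ x * w₂ y) * fsq (M x * Z * (N y)ᵀ) =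
          (P₁ * P₂)⁻¹ * w₂ y * ∑ x ∈ s₁, w₁ x * fsq (M x * (Z * (N y)ᵀ)) := by
        rw [Finset.mul_sum]
        refine Finset.sum_congr rfl fun x _ => ?_
        rw [Matrix.mul_assoc]; ring
      rw [h5]
      refine (mul_le_mul_of_nonneg_left h3 (mul_nonneg
        (inv_nonneg.2 (mul_pos hP₁ hP₂).le) (hw₂ y))).trans (le_of_eq ?_)
      rw [h4]; field_simp
    rw [Finset.sum_product_right]
    refine (Finset.sum_le_sum e).trans ?_
    rw [← Finset.mul_sum]
    have h3 := (h₂ n Zᵀ hVZ).trans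
        (mul_le_mul_of_nonneg_left (hcrude τ₂ ht₂ ht₂' hτ₂ Zᵀ) hP₂.le)
    rw [fsq_transpose] at h3
    calc _ ≤ P₂⁻¹ * (4 * t₁) * (P₂ * (4 * t₂ * fsq Z)) := by gcongr
      _ = 16 * (t₁ * t₂) * fsq Z := by field_simp; ring
      _ ≤ 16 * (t₁ * t₂) * L := by gcongr
      _ ≤ (2 * (t₁ + t₂)) ^ 2 * L := by
        refine mul_le_mul_of_nonneg_right ?_ hL0
        nlinarith [sq_nonneg (t₁ - t₂)]
      _ = _ := by rw [mul_pow (2 * (t₁ + t₂)), Real.sq_sqrt hL0]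
  have hD0 : 0 ≤ D := Real.sqrt_nonneg _
  have hD'0 : 0 ≤ D' := Real.sqrt_nonneg _
  have m1 := minkowski_fsq (s₁ ×ˢ s₂) (fun x => (P₁ * P₂)⁻¹ * (w₁ x.1 * w₂ x.2)) _ _ hw
    (by positivity) (by positivity) b1 b2
  have m2 := minkowski_fsq (s₁ ×ˢ s₂) (fun x => (P₁ * P₂)⁻¹ * (w₁ x.1 * w₂ x.2)) _ _ hw
    (by positivity) (by positivity) m1 b3
  calc _ = ∑ x ∈ s₁ ×ˢ s₂, (P₁ * P₂)⁻¹ * (w₁ x.1 * w₂ x.2) *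
        fsq (M x.1 * Y * V + Uᵀ * (N x.2 * Y')ᵀ + M x.1 * Z * (N x.2)ᵀ) := by
        rw [Finset.mul_sum]
        refine Finset.sum_congr rfl fun x hx => ?_
        rw [Finset.mem_product] at hx
        rw [core_split (hM _ hx.1) (hN _ hx.2) X, ← mul_assoc, ← hY, ← hY', ← hZ]
    _ ≤ _ := m2
    _ = _ := by ring

/-! ### Sketched cores and elementary bounds -/

/-- The sketched least-squares operator `((S U)ᵀ S U)⁻¹ (S U)ᵀ S`. -/
def sketchOp {n c m : ℕ} (S : Matrix (Fin m) (Fin n) ℝ) (U : Matrix (Fin n) (Fin c) ℝ) :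
    Matrix (Fin c) (Fin n) ℝ :=
  ((S * U)ᵀ * (S * U))⁻¹ * (S * U)ᵀ * S

lemma lev_nonneg_of_factor {n c : ℕ} {A U : Matrix (Fin n) (Fin c) ℝ}
    {B : Matrix (Fin c) (Fin c) ℝ} (hB : IsUnit B.det) (hU : Uᵀ * U = 1) (hA : A = U * B)
    (i : Fin n) : 0 ≤ lev A i := by
  rw [hA, lev_factor hB hU]; exact dotProduct_self_nonneg_real _

/-- The estimates for one sketch, in terms of the sketched matrix `A` itself. -/
lemma sketch_side {n c m : ℕ} (A : Matrix (Fin n) (Fin c) ℝ) {π : Fin n → ℝ} (hn : 3 ≤ n)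
    (h0 : ∀ i, 0 < π i) (h1 : ∑ i, π i = 1) (hA : IsUnit (Aᵀ * A).det)
    (hlev : ∀ i, lev A i < m * π i) {δ : ℝ} (hδ0 : 0 < δ) (hδ1 : δ ≤ 1 / 27)
    (hC : 120000 * thetaMax A π * c * Real.log (c / δ) ≤ m) :
    ∃ (U : Matrix (Fin n) (Fin c) ℝ) (B : Matrix (Fin c) (Fin c) ℝ), IsUnit B.det ∧
      Uᵀ * U = 1 ∧ A = U * B ∧ 0 ≤ thetaMax A π * c / m ∧
      thetaMax A π * c / m ≤ 1 / 120000 ∧ (∀ i, 0 ≤ lev A i / (m * π i)) ∧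
      (∀ i, lev A i / (m * π i) ≤ thetaMax A π * c / m) ∧
      ∃ ζ : Finset (Fin m → Fin n), 1 - δ / 2 ≤ ∑ ω ∈ ζ, samplingP π ω ∧
      (∀ ω ∈ ζ, IsUnit ((samplingSdeb A π ω * A)ᵀ * (samplingSdeb A π ω * A)).det) ∧
      (∀ ω ∈ ζ, sketchOp (samplingSdeb A π ω) U * U = 1) ∧
      ∀ (q : ℕ) (Y : Matrix (Fin n) (Fin q) ℝ), Uᵀ * Y = 0 →
        ∑ ω ∈ ζ, samplingP π ω * fsq (sketchOp (samplingSdeb A π ω) U * Y) ≤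
          (∑ ω ∈ ζ, samplingP π ω) *
            (√(∑ i, lev A i / (m * π i) * ∑ j, Y i j ^ 2) +
              16 * (thetaMax A π * c / m) * √(fsq Y)) ^ 2 := by
  obtain ⟨U, B, hB, hU, hAU⟩ := exists_orthonormal_factor hA
  have hl : ∀ i, lev A i = U i ⬝ᵥ U i := fun i => by rw [hAU, lev_factor hB hU]
  have hl0 : ∀ i, 0 ≤ lev A i := lev_nonneg_of_factor hB hU hAU
  have hm : 0 < m := by
    have h := (hl0 ⟨0, by omega⟩).trans_lt (hlev ⟨0, by omega⟩)
    rcases Nat.eq_zero_or_pos m with h' | h'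
    · simp [h'] at h
    · exact h'
  have hm' : (0 : ℝ) < m := by exact_mod_cast hm
  have hc0 : (0 : ℝ) ≤ c := Nat.cast_nonneg c
  have hθ : 0 ≤ thetaMax A π :=
    Real.iSup_nonneg fun i => div_nonneg (hl0 i) (mul_nonneg hc0 (h0 i).le)
  have ht0 : 0 ≤ thetaMax A π * c / m := by positivity
  have ht : ∀ i, lev A i ≤ thetaMax A π * c / m * (m * π i) := by
    intro i
    have e : thetaMax A π * c / m * (m * π i) = thetaMax A π * (c * π i) := by field_simp
    rw [e]
    rcases Nat.eq_zero_or_pos c with hc | hc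
    · subst hc
      rw [hl]; simp [dotProduct]
    · have h2 : lev A i / (c * π i) ≤ thetaMax A π :=
        le_ciSup (f := fun i => lev A i / (c * π i)) (Set.finite_range _).bddAbove i
      have hc' : (0 : ℝ) < c := by exact_mod_cast hc
      rwa [div_le_iff₀ (mul_pos hc' (h0 i))] at h2
  have hC' : 120000 * (thetaMax A π * c / m) * Real.log (c / δ) ≤ 1 := by
    have e : 120000 * (thetaMax A π * c / m) * Real.log (c / δ) =
        120000 * thetaMax A π * c * Real.log (c / δ) / m := by ring
    rw [e, div_le_one hm']; exact hC
  obtain ⟨ht1, ζ, hζ, hinv, hvar⟩ := one_sided (c := c) h0 h1 hm hU ht0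
    (fun i => by rw [← hl]; exact hlev i) (fun i => by rw [← hl]; exact ht i) hδ0 hδ1
    (fun hc => by simp [hc]) (fun _ => hC')
  simp only [← hl] at hinv hvar
  have hg : ∀ ω (q : ℕ) (Y : Matrix (Fin n) (Fin q) ℝ),
      (samplingSdeb A π ω * U)ᵀ * (samplingSdeb A π ω * Y) = _ := fun ω q Y =>
    samplingSdeb_gram h0 hm hlev ω U Y
  have hK : ∀ (ω : Fin m → Fin n) (q : ℕ) (Y : Matrix (Fin n) (Fin q) ℝ), sketchOp (samplingSdeb A π ω) U * Y =
      (sgram (fun i => 1 / (m * π i - lev A i)) ω U U)⁻¹ *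
        sgram (fun i => 1 / (m * π i - lev A i)) ω U Y := by
    intro ω q Y
    rw [sketchOp, Matrix.mul_assoc, Matrix.mul_assoc, hg, hg]
  refine ⟨U, B, hB, hU, hAU, ht0, ht1, fun i => div_nonneg (hl0 i) (mul_pos hm' (h0 i)).le,
    fun i => by rw [div_le_iff₀ (mul_pos hm' (h0 i))]; exact ht i, ζ, hζ, ?_, ?_, ?_⟩
  · intro ω hω
    have e : (samplingSdeb A π ω * A)ᵀ * (samplingSdeb A π ω * A) =
        Bᵀ * ((samplingSdeb A π ω * U)ᵀ * (samplingSdeb A π ω * U)) * B := by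
      generalize samplingSdeb A π ω = S
      rw [hAU, ← Matrix.mul_assoc S U B, Matrix.transpose_mul (S * U) B]
      simp only [Matrix.mul_assoc]
    rw [e, hg, Matrix.det_mul, Matrix.det_mul, Matrix.det_transpose]
    exact (hB.mul (hinv ω hω)).mul hB
  · intro ω hω
    rw [hK, Matrix.nonsing_inv_mul _ (hinv ω hω)]
  · intro q Y hY
    simp only [hK]
    exact hvar q Y hY

lemma curUcheck_reconstruction {n p c r mc mr : ℕ} (X : Matrix (Fin n) (Fin p) ℝ)
    {Cm U : Matrix (Fin n) (Fin c) ℝ} {Rm : Matrix (Fin r) (Fin p) ℝ}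
    {V : Matrix (Fin p) (Fin r) ℝ} {B : Matrix (Fin c) (Fin c) ℝ} {B' : Matrix (Fin r) (Fin r) ℝ}
    (hB : IsUnit B.det) (hB' : IsUnit B'.det) (hC : Cm = U * B) (hR : Rmᵀ = V * B')
    (πC : Fin n → ℝ) (πR : Fin p → ℝ) (ω : (Fin mc → Fin n) × (Fin mr → Fin p)) :
    Cm * curUcheck X Cm Rm πC πR ω * Rm =
      U * (sketchOp (samplingSdeb Cm πC ω.1) U * X *
        (sketchOp (samplingSdeb Rmᵀ πR ω.2) V)ᵀ) * Vᵀ := by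
  rw [curUcheck]
  generalize samplingSdeb Cm πC ω.1 = S
  generalize samplingSdeb Rmᵀ πR ω.2 = T
  have h1 := sketch_factor (U := U) hB S
  have h2 := congrArg Matrix.transpose (sketch_factor (U := V) hB' T)
  rw [← hC] at h1
  rw [← hR] at h2
  have e : Rm * Tᵀ * T * Rmᵀ = (T * Rmᵀ)ᵀ * (T * Rmᵀ) := by
    rw [Matrix.transpose_mul, Matrix.transpose_transpose]; simp only [Matrix.mul_assoc]
  have h2' : T * Rmᵀ * ((T * Rmᵀ)ᵀ * (T * Rmᵀ))⁻¹ * Rm =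
      (((T * V)ᵀ * (T * V))⁻¹ * (T * V)ᵀ)ᵀ * Vᵀ := by
    rw [← Matrix.transpose_mul, ← h2]
    generalize T * Rmᵀ = W
    simp only [Matrix.transpose_mul, Matrix.transpose_transpose, Matrix.transpose_nonsing_inv]
  rw [e]
  calc _ = Cm * (((S * Cm)ᵀ * (S * Cm))⁻¹ * (S * Cm)ᵀ) * (S * X * Tᵀ) *
        (T * Rmᵀ * ((T * Rmᵀ)ᵀ * (T * Rmᵀ))⁻¹ * Rm) := by simp only [Matrix.mul_assoc]
    _ = _ := by
      rw [h1, h2', sketchOp, sketchOp, Matrix.transpose_mul _ T]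
      simp only [Matrix.mul_assoc]

lemma optCUR_reconstruction {n p c r : ℕ} (X : Matrix (Fin n) (Fin p) ℝ)
    {Cm U : Matrix (Fin n) (Fin c) ℝ} {Rm : Matrix (Fin r) (Fin p) ℝ}
    {V : Matrix (Fin p) (Fin r) ℝ} {B : Matrix (Fin c) (Fin c) ℝ} {B' : Matrix (Fin r) (Fin r) ℝ}
    (hB : IsUnit B.det) (hB' : IsUnit B'.det) (hU : Uᵀ * U = 1) (hV : Vᵀ * V = 1)
    (hC : Cm = U * B) (hR : Rmᵀ = V * B') :
    Cm * optCUR X Cm Rm * Rm = U * (Uᵀ * X * V) * Vᵀ := by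
  have h1 := proj_factor hB hU
  have h2 := proj_factor hB' hV
  rw [← hC] at h1
  rw [← hR, Matrix.transpose_transpose] at h2
  calc _ = (Cm * (Cmᵀ * Cm)⁻¹ * Cmᵀ) * X * (Rmᵀ * (Rm * Rmᵀ)⁻¹ * Rm) := by
        rw [optCUR]; simp only [Matrix.mul_assoc]
    _ = _ := by rw [h1, h2]; simp only [Matrix.mul_assoc]

lemma frobNorm_diagonal_sqrt_mul {n q : ℕ} {τ : Fin n → ℝ} (hτ : ∀ i, 0 ≤ τ i)
    (Y : Matrix (Fin n) (Fin q) ℝ) :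
    frobNorm (Matrix.diagonal (fun i => √(τ i)) * Y) = √(∑ i, τ i * ∑ j, Y i j ^ 2) := by
  rw [frobNorm_eq, fsq]
  congr 1
  refine Finset.sum_congr rfl fun i _ => ?_
  rw [Finset.mul_sum]
  refine Finset.sum_congr rfl fun j _ => ?_
  rw [Matrix.diagonal_mul, mul_pow, Real.sq_sqrt (hτ i)]

lemma one_le_log_div_log_log {n : ℕ} (hn : 3 ≤ n) :
    1 ≤ Real.log n / Real.log (Real.log n) := by
  have h3 : (3 : ℝ) ≤ n := by exact_mod_cast hn
  have h1 : 1 < Real.log n := by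
    rw [Real.lt_log_iff_exp_lt (by linarith)]
    linarith [Real.exp_one_lt_d9]
  have h2 : 0 < Real.log (Real.log n) := Real.log_pos h1
  rw [one_le_div h2]
  linarith [Real.log_le_sub_one_of_pos (zero_lt_one.trans h1)]

lemma sq_le_sqrt_theta {θ : ℝ} {c m : ℕ} (h0 : 0 ≤ θ * c / m) (h1 : θ * c / m ≤ 1 / 120000) :
    (θ * c / m) ^ 2 ≤ √(θ ^ 3 * c ^ 3 / m ^ 3) := by
  rw [← mul_pow, ← div_pow]
  refine Real.le_sqrt_of_sq_le ?_
  rw [← pow_mul]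
  exact pow_le_pow_of_le_one h0 (by linarith) (by norm_num)

lemma le_one_div_of_le_rpow {n : ℕ} (hn : 3 ≤ n) {α δ : ℝ} (hα : 0 < α)
    (hδ : δ ≤ (n : ℝ) ^ (-(3 + α))) : δ ≤ 1 / 27 := by
  have h3 : (3 : ℝ) ≤ n := by exact_mod_cast hn
  calc δ ≤ (n : ℝ) ^ (-(3 + α)) := hδ
    _ ≤ (n : ℝ) ^ (-3 : ℝ) := Real.rpow_le_rpow_of_exponent_le (by linarith) (by linarith)
    _ ≤ (3 : ℝ) ^ (-3 : ℝ) :=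
      Real.rpow_le_rpow_of_nonpos (by norm_num) h3 (by norm_num)
    _ = 1 / 27 := by
      rw [Real.rpow_neg (by norm_num)]; norm_num

/-- The cross term of `(D + a) ^ 2` is at most `√E * D`, and the square of `a` is at most `E`. -/
lemma final_bound {D a E : ℝ} (hD : 0 ≤ D) (h : 4 * a ^ 2 ≤ E) :
    (D + a) ^ 2 ≤ D ^ 2 + √E * D + E := by
  have h1 : 2 * a ≤ √E := Real.le_sqrt_of_sq_le (by nlinarith)
  nlinarith [mul_le_mul_of_nonneg_right h1 hD, sq_nonneg a]

/-! ### Variance of the debiased core -/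

/-- **Variance of debiased fast CUR decomposition** (Theorem F.1, variance
part): there are absolute constants `C₀, C' > 0` such that, under the same
hypotheses as the bias bound, there is an event `ζ` of probability at least
`1 − δ` on which all inverted matrices in `Ǔ` are invertible and
`Var_ζ(Ǔ) ≤ Δ_CUR + ε L(U_CUR)`, where
`ε = C' ((log n/log log n) √(θ_max(C)³ c³/m_c³) +
        (log p/log log p) √(θ_max(Rᵀ)³ r³/m_r³))`,
`Δ_CUR = (Δ₁ + Δ₂)² + √(ε L(U_CUR)) (Δ₁ + Δ₂)`. -/
theorem debiased_fast_cur_variance :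
    ∃ C₀ C' : ℝ, 0 < C₀ ∧ 0 < C' ∧
      ∀ (n p c r mc mr : ℕ) (X : Matrix (Fin n) (Fin p) ℝ)
        (Cm : Matrix (Fin n) (Fin c) ℝ) (Rm : Matrix (Fin r) (Fin p) ℝ)
        (g : Fin c → Fin p) (f : Fin r → Fin n)
        (πC : Fin n → ℝ) (πR : Fin p → ℝ) (αc αr : ℝ),
        3 ≤ n → 3 ≤ p →
        Function.Injective g → Cm = X.submatrix id g →
        Function.Injective f → Rm = X.submatrix f id →
        IsUnit (Cmᵀ * Cm).det → IsUnit (Rm * Rmᵀ).det →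
        0 < αc → 0 < αr →
        (∀ i, Cm i ≠ 0 → (n : ℝ) ^ (-αc) ≤ (Cm i ⬝ᵥ Cm i) / frobNorm Cm ^ 2) →
        (∀ j, Rmᵀ j ≠ 0 →
          (p : ℝ) ^ (-αr) ≤ (Rmᵀ j ⬝ᵥ Rmᵀ j) / frobNorm Rmᵀ ^ 2) →
        (∀ i, 0 < πC i) → (∑ i, πC i = 1) →
        (∀ j, 0 < πR j) → (∑ j, πR j = 1) →
        (∀ i, lev Cm i < mc * πC i) →
        (∀ j, lev Rmᵀ j < mr * πR j) →
        ∀ δ : ℝ, 0 < δ →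
          δ ≤ (n : ℝ) ^ (-(3 + αc)) → δ ≤ (p : ℝ) ^ (-(3 + αr)) →
        C₀ * thetaMax Cm πC * c * Real.log (c / δ) ≤ mc →
        C₀ * thetaMax Rmᵀ πR * r * Real.log (r / δ) ≤ mr →
        ∃ ζ : Finset ((Fin mc → Fin n) × (Fin mr → Fin p)),
          1 - δ ≤ eventProb (curP πC πR) ζ ∧
          (∀ ω ∈ ζ,
            IsUnit ((samplingSdeb Cm πC ω.1 * Cm)ᵀ *
              (samplingSdeb Cm πC ω.1 * Cm)).det ∧
            IsUnit (Rm * (samplingSdeb Rmᵀ πR ω.2)ᵀ *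
              samplingSdeb Rmᵀ πR ω.2 * Rmᵀ).det) ∧
          condExp (curP πC πR) ζ
              (fun ω => lossCUR X Cm Rm (curUcheck X Cm Rm πC πR ω)) -
              lossCUR X Cm Rm (optCUR X Cm Rm)
            ≤ ((curDelta1 X Cm πC mc + curDelta2 X Rm πR mr) ^ 2 +
                Real.sqrt
                  ((C' * ((Real.log n / Real.log (Real.log n)) *
                        Real.sqrt (thetaMax Cm πC ^ 3 * c ^ 3 / mc ^ 3) +
                      (Real.log p / Real.log (Real.log p)) *
                        Real.sqrt (thetaMax Rmᵀ πR ^ 3 * r ^ 3 / mr ^ 3))) *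
                    lossCUR X Cm Rm (optCUR X Cm Rm)) *
                  (curDelta1 X Cm πC mc + curDelta2 X Rm πR mr)) +
              (C' * ((Real.log n / Real.log (Real.log n)) *
                    Real.sqrt (thetaMax Cm πC ^ 3 * c ^ 3 / mc ^ 3) +
                  (Real.log p / Real.log (Real.log p)) *
                    Real.sqrt (thetaMax Rmᵀ πR ^ 3 * r ^ 3 / mr ^ 3))) *
                lossCUR X Cm Rm (optCUR X Cm Rm) := by
  refine ⟨120000, 2592, by norm_num, by norm_num, ?_⟩
  intro n p c r mc mr X Cm Rm g f πC πR αc αr hn hp _ _ _ _ hCu hRu hαc hαr _ _ hπC hπC1 hπR hπR1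
    hlC hlR δ hδ hδn hδp hC hR
  have hδ1 : δ ≤ 1 / 27 := le_one_div_of_le_rpow hn hαc hδn
  obtain ⟨U, B, hB, hU, hCU, t0, t1, τ0, τ1, ζ₁, hζ₁, inv₁, op₁, var₁⟩ :=
    sketch_side Cm hn hπC hπC1 hCu hlC hδ hδ1 hC
  obtain ⟨V, B', hB', hV, hRV, t0', t1', τ0', τ1', ζ₂, hζ₂, inv₂, op₂, var₂⟩ :=
    sketch_side Rmᵀ hp hπR hπR1 (by rwa [Matrix.transpose_transpose]) hlR hδ hδ1 hR
  set tC := thetaMax Cm πC * c / mc with htC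
  set tR := thetaMax Rmᵀ πR * r / mr with htR
  have hP₁ : 0 < ∑ ω ∈ ζ₁, samplingP πC ω := by linarith
  have hP₂ : 0 < ∑ ω ∈ ζ₂, samplingP πR ω := by linarith
  have hprob : eventProb (curP πC πR) (ζ₁ ×ˢ ζ₂) =
      (∑ ω ∈ ζ₁, samplingP πC ω) * ∑ ω ∈ ζ₂, samplingP πR ω := by
    rw [eventProb, Finset.sum_product, Finset.sum_mul_sum]
    rfl
  have hloss : ∀ ω : (Fin mc → Fin n) × (Fin mr → Fin p),
      lossCUR X Cm Rm (curUcheck X Cm Rm πC πR ω) =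
      fsq (sketchOp (samplingSdeb Cm πC ω.1) U * X * (sketchOp (samplingSdeb Rmᵀ πR ω.2) V)ᵀ -
        Uᵀ * X * V) + (fsq X - fsq (Uᵀ * X * V)) := by
    intro ω
    rw [lossCUR, frobNorm_sq, curUcheck_reconstruction X hB hB' hCU hRV,
      loss_orthonormal hU hV]
  have hopt : lossCUR X Cm Rm (optCUR X Cm Rm) = fsq X - fsq (Uᵀ * X * V) := by
    rw [lossCUR, frobNorm_sq, optCUR_reconstruction X hB hB' hU hV hCU hRV,
      loss_orthonormal hU hV, sub_self]
    simp [fsq]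
  have hΔ₁ : curDelta1 X Cm πC mc =
      √(∑ i, lev Cm i / (mc * πC i) * ∑ j, (X - U * (Uᵀ * X)) i j ^ 2) := by
    rw [curDelta1, Matrix.mul_assoc, frobNorm_diagonal_sqrt_mul τ0]
    have h := proj_factor hB hU
    rw [← hCU] at h
    rw [h, Matrix.sub_mul, Matrix.one_mul, Matrix.mul_assoc]
  have hΔ₂ : curDelta2 X Rm πR mr =
      √(∑ i, lev Rmᵀ i / (mr * πR i) * ∑ j, (Xᵀ - V * (Vᵀ * Xᵀ)) i j ^ 2) := by
    rw [curDelta2, Matrix.mul_assoc, frobNorm_diagonal_sqrt_mul τ0']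
    have h := proj_factor hB' hV
    rw [← hRV, Matrix.transpose_transpose] at h
    rw [h, Matrix.sub_mul, Matrix.one_mul, Matrix.mul_assoc]
  have hcore := variance_core ζ₁ ζ₂ (samplingP πC) (samplingP πR)
    (fun ω => Finset.prod_nonneg fun s _ => (hπC _).le)
    (fun ω => Finset.prod_nonneg fun s _ => (hπR _).le) hP₁ hP₂ hU hV X
    (fun ω => sketchOp (samplingSdeb Cm πC ω) U) (fun ω => sketchOp (samplingSdeb Rmᵀ πR ω) V)
    op₁ op₂ t0 t0' t1 t1' (fun i => lev Cm i / (mc * πC i)) (fun i => lev Rmᵀ i / (mr * πR i))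
    τ1 τ1' var₁ var₂
  have hL0 : 0 ≤ fsq X - fsq (Uᵀ * X * V) := by
    rw [← hopt, lossCUR]; exact sq_nonneg _
  refine ⟨ζ₁ ×ˢ ζ₂, ?_, ?_, ?_⟩
  · rw [hprob]
    nlinarith [mul_le_mul hζ₁ hζ₂ (by linarith) hP₁.le, sq_nonneg δ]
  · intro ω hω
    rw [Finset.mem_product] at hω
    refine ⟨inv₁ _ hω.1, ?_⟩
    have h := inv₂ _ hω.2
    rw [Matrix.transpose_mul, Matrix.transpose_transpose] at h
    simpa only [Matrix.mul_assoc] using h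
  · have hexp : condExp (curP πC πR) (ζ₁ ×ˢ ζ₂)
          (fun ω => lossCUR X Cm Rm (curUcheck X Cm Rm πC πR ω)) -
          lossCUR X Cm Rm (optCUR X Cm Rm) =
        ((∑ x ∈ ζ₁, samplingP πC x) * ∑ x ∈ ζ₂, samplingP πR x)⁻¹ *
          ∑ x ∈ ζ₁ ×ˢ ζ₂, samplingP πC x.1 * samplingP πR x.2 *
            fsq (sketchOp (samplingSdeb Cm πC x.1) U * X *
              (sketchOp (samplingSdeb Rmᵀ πR x.2) V)ᵀ - Uᵀ * X * V) := by
      have hP : eventProb (curP πC πR) (ζ₁ ×ˢ ζ₂) ≠ 0 := by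
        rw [hprob]; exact (mul_pos hP₁ hP₂).ne'
      simp only [condExp, hopt, hloss, smul_eq_mul, mul_add, Finset.sum_add_distrib]
      rw [← Finset.sum_mul, ← mul_assoc (eventProb (curP πC πR) (ζ₁ ×ˢ ζ₂))⁻¹
        (∑ ω ∈ ζ₁ ×ˢ ζ₂, curP πC πR ω)]
      have e : (eventProb (curP πC πR) (ζ₁ ×ˢ ζ₂))⁻¹ * ∑ ω ∈ ζ₁ ×ˢ ζ₂, curP πC πR ω = 1 :=
        inv_mul_cancel₀ hP
      rw [e, one_mul, add_sub_cancel_right, hprob]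
      rfl
    rw [hexp, hopt, hΔ₁, hΔ₂]
    refine hcore.trans (final_bound (add_nonneg (Real.sqrt_nonneg _) (Real.sqrt_nonneg _)) ?_)
    have h1 := (sq_le_sqrt_theta t0 t1).trans
      (le_mul_of_one_le_left (Real.sqrt_nonneg _) (one_le_log_div_log_log hn))
    have h2 := (sq_le_sqrt_theta t0' t1').trans
      (le_mul_of_one_le_left (Real.sqrt_nonneg _) (one_le_log_div_log_log hp))
    rw [mul_pow, Real.sq_sqrt hL0, ← mul_assoc]
    refine mul_le_mul_of_nonneg_right ?_ hL0
    -- `4 * 18 ^ 2 * (tC + tR) ^ 2 ≤ 2592 * (tC ^ 2 + tR ^ 2)`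
    nlinarith [sq_nonneg (tC - tR)]

end
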